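/- arXiv:2503.16014 — 3 statements merged into one kernel-verified Lean document; each statement's English description precedes it below -/
import Mathlib

section
/- Under the causal model G1, fix a time index t with 2 ≤ t ≤ T and an intervention value x*. Let C range over configurations c = (v_t, w_t, z_{t−1}, S_{t−1}). Assuming that P(x_t = x*, c) > 0 for every configuration c with P(c) > 0, the interventional marginal satisfies P(y_t = y | do(x_t = x*)) = Σ_c P(y_t = y | x_t = x*, c) P(c) = Σ_c Σ_{z_t} b_t(y | z_t, x*, v_t, y_{t−1}) a_t(z_t | x*, w_t, z_{t−1}, y_{t−1}) P(c), for every value y. -/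
open Finset

/-- A trajectory of the six processes (u, x, v, w, z, y) over times 1..T; index 0 of
`Fin (T+1)` is a dummy time whose value is pinned to `default` by the joint pmf. -/
structure Traj (U X V W Z Y : Type) (T : ℕ) where
  u : Fin (T + 1) → U
  x : Fin (T + 1) → X
  v : Fin (T + 1) → V
  w : Fin (T + 1) → W
  z : Fin (T + 1) → Z
  y : Fin (T + 1) → Y

/-- Trajectories are equivalent to a finite product of function types. -/
def trajEquiv (U X V W Z Y : Type) (T : ℕ) :
    Traj U X V W Z Y T ≃
      (Fin (T + 1) → U) × (Fin (T + 1) → X) × (Fin (T + 1) → V) × (Fin (T + 1) → W) ×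
        (Fin (T + 1) → Z) × (Fin (T + 1) → Y) where
  toFun τ := (τ.u, τ.x, τ.v, τ.w, τ.z, τ.y)
  invFun p := ⟨p.1, p.2.1, p.2.2.1, p.2.2.2.1, p.2.2.2.2.1, p.2.2.2.2.2⟩
  left_inv τ := rfl
  right_inv p := rfl

instance {U X V W Z Y : Type} {T : ℕ}
    [Fintype U] [Fintype X] [Fintype V] [Fintype W] [Fintype Z] [Fintype Y]
    [DecidableEq U] [DecidableEq X] [DecidableEq V] [DecidableEq W] [DecidableEq Z]
    [DecidableEq Y] : Fintype (Traj U X V W Z Y T) :=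
  Fintype.ofEquiv _ (trajEquiv U X V W Z Y T).symm

instance {U X V W Z Y : Type} {T : ℕ}
    [DecidableEq U] [DecidableEq X] [DecidableEq V] [DecidableEq W] [DecidableEq Z]
    [DecidableEq Y] : DecidableEq (Traj U X V W Z Y T) := fun a b =>
  decidable_of_iff
    (a.u = b.u ∧ a.x = b.x ∧ a.v = b.v ∧ a.w = b.w ∧ a.z = b.z ∧ a.y = b.y)
    (by cases a; cases b; simp)

/-- Time index t as an element of `Fin (T+1)` (defined for all naturals via truncation;
only used for t ≤ T). -/
def idx (T t : ℕ) : Fin (T + 1) := ⟨min t T, Nat.lt_succ_of_le (min_le_right t T)⟩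

open Classical in
/-- Probability of an event under a pmf on a finite type. -/
noncomputable def pr {α : Type*} [Fintype α] (p : α → ℝ) (E : α → Prop) : ℝ :=
  ∑ a, if E a then p a else 0

/-- Conditional probability P(E | F) = P(E ∧ F) / P(F). -/
noncomputable def cpr {α : Type*} [Fintype α] (p : α → ℝ) (E F : α → Prop) : ℝ :=
  pr p (fun a => E a ∧ F a) / pr p F

variable {U X V W Z Y : Type}
  [Fintype U] [Fintype X] [Fintype V] [Fintype W] [Fintype Z] [Fintype Y]
  [DecidableEq U] [DecidableEq X] [DecidableEq V] [DecidableEq W] [DecidableEq Z] [DecidableEq Y]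
  [Inhabited U] [Inhabited X] [Inhabited V] [Inhabited W] [Inhabited Z] [Inhabited Y]

/-- Joint pmf of the causal model G1:
P = q_1(u_1) ∏_{t=2}^T q_u(u_t|u_{t-1}) ∏_{t=1}^T q_x(x_t|u_t) q_v(v_t|u_t) q_w(w_t|u_t)
  · a_1(z_1|x_1,w_1) b_1(y_1|z_1,x_1,v_1)
  · ∏_{t=2}^T a_t(z_t|x_t,w_t,z_{t-1},y_{t-1}) b_t(y_t|z_t,x_t,v_t,y_{t-1});
the dummy time-0 coordinates are pinned to `default` so that this is a pmf. -/
noncomputable def jointG1 (T : ℕ)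
    (q1 : U → ℝ) (qu : U → U → ℝ) (qx : X → U → ℝ) (qv : V → U → ℝ) (qw : W → U → ℝ)
    (a1 : Z → X → W → ℝ) (b1 : Y → Z → X → V → ℝ)
    (a : ℕ → Z → X → W → Z → Y → ℝ) (b : ℕ → Y → Z → X → V → Y → ℝ)
    (τ : Traj U X V W Z Y T) : ℝ :=
  (if τ.u (idx T 0) = default ∧ τ.x (idx T 0) = default ∧ τ.v (idx T 0) = default ∧
      τ.w (idx T 0) = default ∧ τ.z (idx T 0) = default ∧ τ.y (idx T 0) = default
    then 1 else 0) *
  (q1 (τ.u (idx T 1)) * ∏ j ∈ Finset.Icc 2 T, qu (τ.u (idx T j)) (τ.u (idx T (j - 1)))) *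
  (∏ j ∈ Finset.Icc 1 T,
    (qx (τ.x (idx T j)) (τ.u (idx T j)) * qv (τ.v (idx T j)) (τ.u (idx T j)) *
      qw (τ.w (idx T j)) (τ.u (idx T j)))) *
  (a1 (τ.z (idx T 1)) (τ.x (idx T 1)) (τ.w (idx T 1)) *
    b1 (τ.y (idx T 1)) (τ.z (idx T 1)) (τ.x (idx T 1)) (τ.v (idx T 1)) *
    ∏ j ∈ Finset.Icc 2 T,
      (a j (τ.z (idx T j)) (τ.x (idx T j)) (τ.w (idx T j)) (τ.z (idx T (j - 1)))
          (τ.y (idx T (j - 1))) *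
        b j (τ.y (idx T j)) (τ.z (idx T j)) (τ.x (idx T j)) (τ.v (idx T j))
          (τ.y (idx T (j - 1)))))

/-- Interventional pmf of G1 under do(x_j = xs j) for j ∈ J: the truncated factorization,
with the factors q_x(x_j | u_j), j ∈ J, deleted and x_j fixed to xs j. -/
noncomputable def doxG1 (T : ℕ) (J : Finset ℕ) (xs : ℕ → X)
    (q1 : U → ℝ) (qu : U → U → ℝ) (qx : X → U → ℝ) (qv : V → U → ℝ) (qw : W → U → ℝ)
    (a1 : Z → X → W → ℝ) (b1 : Y → Z → X → V → ℝ)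
    (a : ℕ → Z → X → W → Z → Y → ℝ) (b : ℕ → Y → Z → X → V → Y → ℝ)
    (τ : Traj U X V W Z Y T) : ℝ :=
  (if τ.u (idx T 0) = default ∧ τ.x (idx T 0) = default ∧ τ.v (idx T 0) = default ∧
      τ.w (idx T 0) = default ∧ τ.z (idx T 0) = default ∧ τ.y (idx T 0) = default
    then 1 else 0) *
  (q1 (τ.u (idx T 1)) * ∏ j ∈ Finset.Icc 2 T, qu (τ.u (idx T j)) (τ.u (idx T (j - 1)))) *
  (∏ j ∈ Finset.Icc 1 T,
    ((if j ∈ J then (if τ.x (idx T j) = xs j then 1 else 0)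
      else qx (τ.x (idx T j)) (τ.u (idx T j))) *
      qv (τ.v (idx T j)) (τ.u (idx T j)) * qw (τ.w (idx T j)) (τ.u (idx T j)))) *
  (a1 (τ.z (idx T 1)) (τ.x (idx T 1)) (τ.w (idx T 1)) *
    b1 (τ.y (idx T 1)) (τ.z (idx T 1)) (τ.x (idx T 1)) (τ.v (idx T 1)) *
    ∏ j ∈ Finset.Icc 2 T,
      (a j (τ.z (idx T j)) (τ.x (idx T j)) (τ.w (idx T j)) (τ.z (idx T (j - 1)))
          (τ.y (idx T (j - 1))) *
        b j (τ.y (idx T j)) (τ.z (idx T j)) (τ.x (idx T j)) (τ.v (idx T j))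
          (τ.y (idx T (j - 1)))))

/-- The event that the trajectory agrees with the given past values
S_{t-1} = (y_{1:t-1}, x_{1:t-1}, v_{1:t-1}, w_{1:t-1}); histories are indexed by `Fin t`
with index j standing for time j (index 0 being the pinned dummy time). -/
def histEv (T t : ℕ) (τ : Traj U X V W Z Y T)
    (hy : Fin t → Y) (hx : Fin t → X) (hv : Fin t → V) (hw : Fin t → W) : Prop :=
  (∀ j : Fin t, τ.y (idx T j.val) = hy j) ∧ (∀ j : Fin t, τ.x (idx T j.val) = hx j) ∧
    (∀ j : Fin t, τ.v (idx T j.val) = hv j) ∧ (∀ j : Fin t, τ.w (idx T j.val) = hw j)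

section Helpers

/-- The path (indexed by ℕ) attached to a finite sequence. -/
def hpath {S : Type} (n : ℕ) (σ : Fin (n + 1) → S) : ℕ → S := fun j => σ (idx n j)

/-- Markov weight of the first n+1 entries. -/
noncomputable def hwt {S : Type} (k : ℕ → S → S → ℝ) (n : ℕ) (ω : ℕ → S) : ℝ :=
  ∏ j ∈ Finset.range (n + 1), k j (ω j) (ω (j - 1))

theorem hwt_congr {S : Type} (k k' : ℕ → S → S → ℝ) (n : ℕ) (ω ω' : ℕ → S)
    (hk : ∀ j ≤ n, k j = k' j) (h : ∀ j ≤ n, ω j = ω' j) : hwt k n ω = hwt k' n ω' := by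
  unfold hwt
  refine Finset.prod_congr rfl fun j hj => ?_
  have hj' : j ≤ n := by simpa [Nat.lt_succ_iff] using hj
  rw [hk j hj', h j hj', h (j - 1) (by omega)]

theorem hpath_snoc {S : Type} (n : ℕ) (σ : Fin (n + 1) → S) (s : S) :
    ∀ j ≤ n + 1, hpath (n + 1) (Fin.snoc (α := fun _ => S) σ s) j
      = Function.update (hpath n σ) (n + 1) s j := by
  intro j hj
  rcases Nat.lt_or_eq_of_le hj with h | h
  · have h1 : idx (n + 1) j = Fin.castSucc (idx n j) := by
      ext; simp only [idx, Fin.val_castSucc]; omega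
    rw [hpath, h1, Fin.snoc_castSucc, Function.update_of_ne (by omega)]
    rfl
  · subst h
    have h1 : idx (n + 1) (n + 1) = Fin.last (n + 1) := by
      ext; simp [idx]
    rw [hpath, h1, Fin.snoc_last, Function.update_self]

theorem hstep {S : Type} [Fintype S] (k : ℕ → S → S → ℝ) (n : ℕ) (G : (ℕ → S) → ℝ)
    (hG : ∀ ω ω' : ℕ → S, (∀ j ≤ n + 1, ω j = ω' j) → G ω = G ω') :
    ∑ σ : Fin (n + 1 + 1) → S, hwt k (n + 1) (hpath (n + 1) σ) * G (hpath (n + 1) σ) =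
      ∑ σ : Fin (n + 1) → S, hwt k n (hpath n σ) *
        ∑ s, k (n + 1) s (hpath n σ n) * G (Function.update (hpath n σ) (n + 1) s) := by
  rw [← (Fin.snocEquiv (fun _ : Fin (n + 1 + 1) => S)).sum_comp, Fintype.sum_prod_type,
    Finset.sum_comm]
  refine Finset.sum_congr rfl fun σ _ => ?_
  rw [Finset.mul_sum]
  refine Finset.sum_congr rfl fun s _ => ?_
  have h := hpath_snoc n σ s
  have e : (Fin.snocEquiv (fun _ : Fin (n + 1 + 1) => S)) (s, σ)
      = Fin.snoc (α := fun _ => S) σ s := rfl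
  rw [e, hG _ _ h, hwt_congr k k (n + 1) _ _ (fun _ _ => rfl) h, hwt, Finset.prod_range_succ]
  have e2 : ∏ j ∈ Finset.range (n + 1), k j (Function.update (hpath n σ) (n + 1) s j)
      (Function.update (hpath n σ) (n + 1) s (j - 1)) = hwt k n (hpath n σ) := by
    refine hwt_congr k k n _ _ (fun _ _ => rfl) fun j hj => ?_
    rw [Function.update_of_ne (by omega)]
  rw [e2, Function.update_self, Function.update_of_ne (by omega)]
  simp only [Nat.add_sub_cancel]
  ring

theorem hmarg {S : Type} [Fintype S] (k : ℕ → S → S → ℝ) (t T : ℕ) (htT : t ≤ T)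
    (hk : ∀ j, t < j → j ≤ T → ∀ p, ∑ s, k j s p = 1) (G : (ℕ → S) → ℝ)
    (hG : ∀ ω ω' : ℕ → S, (∀ j ≤ t, ω j = ω' j) → G ω = G ω') :
    ∑ σ : Fin (T + 1) → S, hwt k T (hpath T σ) * G (hpath T σ) =
      ∑ σ : Fin (t + 1) → S, hwt k t (hpath t σ) * G (hpath t σ) := by
  induction T, htT using Nat.le_induction with
  | base => rfl
  | succ T hT ih =>
    rw [hstep k T G (fun ω ω' h => hG _ _ fun j hj => h j (by omega)),
      ← ih (fun j h1 h2 => hk j h1 (by omega))]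
    refine Finset.sum_congr rfl fun σ _ => ?_
    have : ∀ s, G (Function.update (hpath T σ) (T + 1) s) = G (hpath T σ) := fun s =>
      hG _ _ fun j hj => Function.update_of_ne (by omega) _ _
    simp only [this]
    rw [← Finset.sum_mul, hk (T + 1) (by omega) le_rfl, one_mul]

/-- Trajectories as sequences of six-tuples. -/
def hequiv (U X V W Z Y : Type) (T : ℕ) :
    Traj U X V W Z Y T ≃ (Fin (T + 1) → U × X × V × W × Z × Y) where
  toFun τ j := (τ.u j, τ.x j, τ.v j, τ.w j, τ.z j, τ.y j)
  invFun σ := ⟨fun j => (σ j).1, fun j => (σ j).2.1, fun j => (σ j).2.2.1,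
    fun j => (σ j).2.2.2.1, fun j => (σ j).2.2.2.2.1, fun j => (σ j).2.2.2.2.2⟩
  left_inv τ := rfl
  right_inv σ := rfl

/-- The kernel of the (possibly intervened) chain. -/
noncomputable def hker {U X V W Z Y : Type}
    [DecidableEq U] [DecidableEq X] [DecidableEq V] [DecidableEq W] [DecidableEq Z]
    [DecidableEq Y]
    [Inhabited U] [Inhabited X] [Inhabited V] [Inhabited W] [Inhabited Z] [Inhabited Y]
    (J : Finset ℕ) (xs : ℕ → X)
    (q1 : U → ℝ) (qu : U → U → ℝ) (qx : X → U → ℝ) (qv : V → U → ℝ) (qw : W → U → ℝ)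
    (a1 : Z → X → W → ℝ) (b1 : Y → Z → X → V → ℝ)
    (a : ℕ → Z → X → W → Z → Y → ℝ) (b : ℕ → Y → Z → X → V → Y → ℝ)
    (j : ℕ) (s p : U × X × V × W × Z × Y) : ℝ :=
  if j = 0 then
    (if s.1 = default ∧ s.2.1 = default ∧ s.2.2.1 = default ∧
      s.2.2.2.1 = default ∧ s.2.2.2.2.1 = default ∧ s.2.2.2.2.2 = default then 1 else 0)
  else
    (if j = 1 then q1 s.1 else qu s.1 p.1) *
    ((if j ∈ J then (if s.2.1 = xs j then 1 else 0) else qx s.2.1 s.1) *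
      qv s.2.2.1 s.1 * qw s.2.2.2.1 s.1) *
    (if j = 1 then a1 s.2.2.2.2.1 s.2.1 s.2.2.2.1 * b1 s.2.2.2.2.2 s.2.2.2.2.1 s.2.1 s.2.2.1
      else a j s.2.2.2.2.1 s.2.1 s.2.2.2.1 p.2.2.2.2.1 p.2.2.2.2.2 *
        b j s.2.2.2.2.2 s.2.2.2.2.1 s.2.1 s.2.2.1 p.2.2.2.2.2)

theorem hprod_split (f : ℕ → ℝ) (T : ℕ) (hT : 1 ≤ T) :
    ∏ j ∈ Finset.Icc 1 T, f j = f 1 * ∏ j ∈ Finset.Icc 2 T, f j := by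
  rw [← Finset.insert_Icc_add_one_left_eq_Icc hT, Finset.prod_insert (by simp)]
  rfl

theorem hprod_split0 (f : ℕ → ℝ) (T : ℕ) (hT : 1 ≤ T) :
    ∏ j ∈ Finset.range (T + 1), f j = f 0 * (f 1 * ∏ j ∈ Finset.Icc 2 T, f j) := by
  rw [← hprod_split f T hT, Finset.range_eq_Ico, Finset.prod_eq_prod_Ico_succ_bot (by omega)]
  rfl

theorem hdox {U X V W Z Y : Type}
    [DecidableEq U] [DecidableEq X] [DecidableEq V] [DecidableEq W] [DecidableEq Z]
    [DecidableEq Y]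
    [Inhabited U] [Inhabited X] [Inhabited V] [Inhabited W] [Inhabited Z] [Inhabited Y]
    (T : ℕ) (hT : 1 ≤ T) (J : Finset ℕ) (xs : ℕ → X)
    (q1 : U → ℝ) (qu : U → U → ℝ) (qx : X → U → ℝ) (qv : V → U → ℝ) (qw : W → U → ℝ)
    (a1 : Z → X → W → ℝ) (b1 : Y → Z → X → V → ℝ)
    (a : ℕ → Z → X → W → Z → Y → ℝ) (b : ℕ → Y → Z → X → V → Y → ℝ)
    (τ : Traj U X V W Z Y T) :
    doxG1 T J xs q1 qu qx qv qw a1 b1 a b τ =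
      hwt (hker J xs q1 qu qx qv qw a1 b1 a b) T (hpath T (hequiv U X V W Z Y T τ)) := by
  rw [hwt, hprod_split0 _ T hT, doxG1, hprod_split _ T hT]
  have e : ∏ j ∈ Finset.Icc 2 T, hker J xs q1 qu qx qv qw a1 b1 a b j
      (hpath T (hequiv U X V W Z Y T τ) j) (hpath T (hequiv U X V W Z Y T τ) (j - 1)) =
      (∏ j ∈ Finset.Icc 2 T, qu (τ.u (idx T j)) (τ.u (idx T (j - 1)))) *
      (∏ j ∈ Finset.Icc 2 T,
    ((if j ∈ J then (if τ.x (idx T j) = xs j then 1 else 0)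
      else qx (τ.x (idx T j)) (τ.u (idx T j))) *
      qv (τ.v (idx T j)) (τ.u (idx T j)) * qw (τ.w (idx T j)) (τ.u (idx T j)))) *
     ∏ j ∈ Finset.Icc 2 T,
      (a j (τ.z (idx T j)) (τ.x (idx T j)) (τ.w (idx T j)) (τ.z (idx T (j - 1)))
          (τ.y (idx T (j - 1))) *
        b j (τ.y (idx T j)) (τ.z (idx T j)) (τ.x (idx T j)) (τ.v (idx T j))
          (τ.y (idx T (j - 1)))) := by
    rw [← Finset.prod_mul_distrib, ← Finset.prod_mul_distrib]
    refine Finset.prod_congr rfl fun j hj => ?_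
    have hj := (Finset.mem_Icc.mp hj).1
    have h0 : j ≠ 0 := by omega
    have h1 : j ≠ 1 := by omega
    simp only [hker, if_neg h0, if_neg h1]
    rfl
  rw [e]
  have e0 : hker J xs q1 qu qx qv qw a1 b1 a b 0
      (hpath T (hequiv U X V W Z Y T τ) 0) (hpath T (hequiv U X V W Z Y T τ) (0 - 1)) =
      (if τ.u (idx T 0) = default ∧ τ.x (idx T 0) = default ∧ τ.v (idx T 0) = default ∧
      τ.w (idx T 0) = default ∧ τ.z (idx T 0) = default ∧ τ.y (idx T 0) = default
        then 1 else 0) := by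
    rw [hker, if_pos rfl]
    rfl
  have e1 : hker J xs q1 qu qx qv qw a1 b1 a b 1
      (hpath T (hequiv U X V W Z Y T τ) 1) (hpath T (hequiv U X V W Z Y T τ) (1 - 1)) =
      q1 (τ.u (idx T 1)) * ((if 1 ∈ J then (if τ.x (idx T 1) = xs 1 then 1 else 0)
      else qx (τ.x (idx T 1)) (τ.u (idx T 1))) *
      qv (τ.v (idx T 1)) (τ.u (idx T 1)) * qw (τ.w (idx T 1)) (τ.u (idx T 1))) *
      (a1 (τ.z (idx T 1)) (τ.x (idx T 1)) (τ.w (idx T 1)) *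
        b1 (τ.y (idx T 1)) (τ.z (idx T 1)) (τ.x (idx T 1)) (τ.v (idx T 1))) := by
    rw [hker, if_neg one_ne_zero, if_pos rfl, if_pos rfl]
    rfl
  rw [e0, e1]
  ring

theorem hjoint {U X V W Z Y : Type}
    [DecidableEq U] [DecidableEq X] [DecidableEq V] [DecidableEq W] [DecidableEq Z]
    [DecidableEq Y]
    [Inhabited U] [Inhabited X] [Inhabited V] [Inhabited W] [Inhabited Z] [Inhabited Y]
    (T : ℕ) (xs : ℕ → X)
    (q1 : U → ℝ) (qu : U → U → ℝ) (qx : X → U → ℝ) (qv : V → U → ℝ) (qw : W → U → ℝ)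
    (a1 : Z → X → W → ℝ) (b1 : Y → Z → X → V → ℝ)
    (a : ℕ → Z → X → W → Z → Y → ℝ) (b : ℕ → Y → Z → X → V → Y → ℝ)
    (τ : Traj U X V W Z Y T) :
    jointG1 T q1 qu qx qv qw a1 b1 a b τ = doxG1 T ∅ xs q1 qu qx qv qw a1 b1 a b τ := by
  simp [jointG1, doxG1]

theorem hkersum {U X V W Z Y : Type}
    [Fintype U] [Fintype X] [Fintype V] [Fintype W] [Fintype Z] [Fintype Y]
    [DecidableEq U] [DecidableEq X] [DecidableEq V] [DecidableEq W] [DecidableEq Z]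
    [DecidableEq Y]
    [Inhabited U] [Inhabited X] [Inhabited V] [Inhabited W] [Inhabited Z] [Inhabited Y]
    (J : Finset ℕ) (xs : ℕ → X)
    (q1 : U → ℝ) (qu : U → U → ℝ) (qx : X → U → ℝ) (qv : V → U → ℝ) (qw : W → U → ℝ)
    (a1 : Z → X → W → ℝ) (b1 : Y → Z → X → V → ℝ)
    (a : ℕ → Z → X → W → Z → Y → ℝ) (b : ℕ → Y → Z → X → V → Y → ℝ)
    (j : ℕ) (hj : 2 ≤ j) (p : U × X × V × W × Z × Y) (φ : X → V → W → ℝ) (ψ : Y → ℝ) :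
    ∑ s, hker J xs q1 qu qx qv qw a1 b1 a b j s p *
      (φ s.2.1 s.2.2.1 s.2.2.2.1 * ψ s.2.2.2.2.2) =
    ∑ u, ∑ v, ∑ w, qu u p.1 * qv v u * qw w u *
      ∑ x, (if j ∈ J then (if x = xs j then 1 else 0) else qx x u) * (φ x v w *
        ∑ z, a j z x w p.2.2.2.2.1 p.2.2.2.2.2 * ∑ y, b j y z x v p.2.2.2.2.2 * ψ y) := by
  simp only [Fintype.sum_prod_type]
  refine Finset.sum_congr rfl fun u _ => ?_
  rw [Finset.sum_comm]
  refine Finset.sum_congr rfl fun v _ => ?_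
  rw [Finset.sum_comm]
  refine Finset.sum_congr rfl fun w _ => ?_
  simp only [Finset.mul_sum]
  refine Finset.sum_congr rfl fun x _ => ?_
  refine Finset.sum_congr rfl fun z _ => ?_
  refine Finset.sum_congr rfl fun y _ => ?_
  have h0 : j ≠ 0 := by omega
  have h1 : j ≠ 1 := by omega
  simp only [hker, if_neg h0, if_neg h1]
  ring

theorem hpr_collapse {α C : Type*} [Fintype α] [Fintype C] (p : α → ℝ) (h : C → ℝ)
    (g : α → C) : ∑ c, h c * pr p (fun a => g a = c) = ∑ a, p a * h (g a) := by
  classical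
  simp only [pr, Finset.mul_sum]
  rw [Finset.sum_comm]
  refine Finset.sum_congr rfl fun x _ => ?_
  simp [mul_comm]

open Classical in
theorem hpr_eq {α : Type*} [Fintype α] (p : α → ℝ) (E : α → Prop) :
    pr p E = ∑ a, p a * (if E a then 1 else 0) := by
  simp [pr]

theorem hmain {U X V W Z Y : Type}
    [Fintype U] [Fintype X] [Fintype V] [Fintype W] [Fintype Z] [Fintype Y]
    [DecidableEq U] [DecidableEq X] [DecidableEq V] [DecidableEq W] [DecidableEq Z]
    [DecidableEq Y]
    [Inhabited U] [Inhabited X] [Inhabited V] [Inhabited W] [Inhabited Z] [Inhabited Y]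
    (T n : ℕ) (hn : 1 ≤ n) (htT : n + 1 ≤ T) (J : Finset ℕ) (hJ : ∀ j ∈ J, j = n + 1) (xs : ℕ → X)
    (q1 : U → ℝ) (qu : U → U → ℝ) (qx : X → U → ℝ) (qv : V → U → ℝ) (qw : W → U → ℝ)
    (a1 : Z → X → W → ℝ) (b1 : Y → Z → X → V → ℝ)
    (a : ℕ → Z → X → W → Z → Y → ℝ) (b : ℕ → Y → Z → X → V → Y → ℝ)
    (hqu : ∀ u0, (∀ u', 0 ≤ qu u' u0) ∧ (∑ u', qu u' u0) = 1)
    (hqx : ∀ u0, (∀ x', 0 ≤ qx x' u0) ∧ (∑ x', qx x' u0) = 1)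
    (hqv : ∀ u0, (∀ v', 0 ≤ qv v' u0) ∧ (∑ v', qv v' u0) = 1)
    (hqw : ∀ u0, (∀ w', 0 ≤ qw w' u0) ∧ (∑ w', qw w' u0) = 1)
    (ha : ∀ j, 2 ≤ j → j ≤ T → ∀ x0 w0 z0 y0,
      (∀ z', 0 ≤ a j z' x0 w0 z0 y0) ∧ (∑ z', a j z' x0 w0 z0 y0) = 1)
    (hb : ∀ j, 2 ≤ j → j ≤ T → ∀ z0 x0 v0 y0,
      (∀ y', 0 ≤ b j y' z0 x0 v0 y0) ∧ (∑ y', b j y' z0 x0 v0 y0) = 1)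
    (G : (ℕ → U × X × V × W × Z × Y) → ℝ)
    (hG : ∀ ω ω' : ℕ → U × X × V × W × Z × Y, (∀ j ≤ n + 1, ω j = ω' j) → G ω = G ω') :
    ∑ τ, doxG1 T J xs q1 qu qx qv qw a1 b1 a b τ * G (hpath T (hequiv U X V W Z Y T τ)) =
      ∑ σ : Fin (n + 1) → U × X × V × W × Z × Y,
        hwt (hker ∅ xs q1 qu qx qv qw a1 b1 a b) n (hpath n σ) *
        ∑ s, hker J xs q1 qu qx qv qw a1 b1 a b (n + 1) s (hpath n σ n) *
          G (Function.update (hpath n σ) (n + 1) s) := by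
  have e1 : ∑ τ, doxG1 T J xs q1 qu qx qv qw a1 b1 a b τ *
      G (hpath T (hequiv U X V W Z Y T τ)) =
      ∑ σ : Fin (T + 1) → U × X × V × W × Z × Y,
        hwt (hker J xs q1 qu qx qv qw a1 b1 a b) T (hpath T σ) * G (hpath T σ) := by
    rw [← (hequiv U X V W Z Y T).sum_comp]
    refine Finset.sum_congr rfl fun τ _ => ?_
    rw [hdox T (by omega)]
  rw [e1, hmarg _ (n + 1) T htT _ G hG, hstep _ n G hG]
  · refine Finset.sum_congr rfl fun σ _ => ?_
    congr 1
    refine hwt_congr _ _ n _ _ (fun j hj => ?_) (fun _ _ => rfl)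
    have hjJ : j ∉ J := fun h => by have := hJ j h; omega
    funext s p
    simp [hker, hjJ]
  · intro j hj hjT p
    have := hkersum J xs q1 qu qx qv qw a1 b1 a b j (by omega) p (fun _ _ _ => 1) (fun _ => 1)
    simp only [mul_one] at this
    rw [this]
    have hjJ : j ∉ J := fun h => by have := hJ j h; omega
    simp only [hb j (by omega) hjT, ha j (by omega) hjT, mul_one, one_mul, hjJ, if_false, hqx,
      ← Finset.mul_sum, hqw, hqv, hqu]

theorem hite1 {E A B : Prop} [Decidable E] [Decidable A] [Decidable B] (h : E ↔ A ∧ B) :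
    (if E then (1 : ℝ) else 0) = (if A then 1 else 0) * ((if B then 1 else 0) * 1) := by
  by_cases hA : A <;> by_cases hB : B <;> simp [h, hA, hB]

theorem hite2 {E A B C : Prop} [Decidable E] [Decidable A] [Decidable B] [Decidable C]
    (h : E ↔ A ∧ B ∧ C) :
    (if E then (1 : ℝ) else 0) =
      (if A then 1 else 0) * ((if B then 1 else 0) * (if C then 1 else 0)) := by
  by_cases hA : A <;> by_cases hB : B <;> by_cases hC : C <;> simp [h, hA, hB, hC]

end Helpers

/-- Immediate causal effect of x_t, graph G1: with
C = (v_t, w_t, z_{t-1}, S_{t-1}) and assuming P(x_t = x*, c) > 0 whenever P(c) > 0,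
P(y_t = y | do(x_t = x*)) = Σ_c P(y_t = y | x_t = x*, c) P(c)
  = Σ_c Σ_{z_t} b_t(y | z_t, x*, v_t, y_{t-1}) a_t(z_t | x*, w_t, z_{t-1}, y_{t-1}) P(c). -/
theorem statement_0 {U X V W Z Y : Type}
    [Fintype U] [Fintype X] [Fintype V] [Fintype W] [Fintype Z] [Fintype Y]
    [DecidableEq U] [DecidableEq X] [DecidableEq V] [DecidableEq W] [DecidableEq Z]
    [DecidableEq Y]
    [Inhabited U] [Inhabited X] [Inhabited V] [Inhabited W] [Inhabited Z] [Inhabited Y]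
    (T t : ℕ) (ht2 : 2 ≤ t) (htT : t ≤ T) (xstar : X)
    (q1 : U → ℝ) (qu : U → U → ℝ) (qx : X → U → ℝ) (qv : V → U → ℝ) (qw : W → U → ℝ)
    (a1 : Z → X → W → ℝ) (b1 : Y → Z → X → V → ℝ)
    (a : ℕ → Z → X → W → Z → Y → ℝ) (b : ℕ → Y → Z → X → V → Y → ℝ)
    (hq1 : (∀ u', 0 ≤ q1 u') ∧ (∑ u', q1 u') = 1)
    (hqu : ∀ u0, (∀ u', 0 ≤ qu u' u0) ∧ (∑ u', qu u' u0) = 1)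
    (hqx : ∀ u0, (∀ x', 0 ≤ qx x' u0) ∧ (∑ x', qx x' u0) = 1)
    (hqv : ∀ u0, (∀ v', 0 ≤ qv v' u0) ∧ (∑ v', qv v' u0) = 1)
    (hqw : ∀ u0, (∀ w', 0 ≤ qw w' u0) ∧ (∑ w', qw w' u0) = 1)
    (ha1 : ∀ x0 w0, (∀ z', 0 ≤ a1 z' x0 w0) ∧ (∑ z', a1 z' x0 w0) = 1)
    (hb1 : ∀ z0 x0 v0, (∀ y', 0 ≤ b1 y' z0 x0 v0) ∧ (∑ y', b1 y' z0 x0 v0) = 1)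
    (ha : ∀ j, 2 ≤ j → j ≤ T → ∀ x0 w0 z0 y0,
      (∀ z', 0 ≤ a j z' x0 w0 z0 y0) ∧ (∑ z', a j z' x0 w0 z0 y0) = 1)
    (hb : ∀ j, 2 ≤ j → j ≤ T → ∀ z0 x0 v0 y0,
      (∀ y', 0 ≤ b j y' z0 x0 v0 y0) ∧ (∑ y', b j y' z0 x0 v0 y0) = 1)
    (hpos : ∀ (vt : V) (wt : W) (zt1 : Z) (hy : Fin t → Y) (hx : Fin t → X)
        (hv : Fin t → V) (hw : Fin t → W),
      0 < pr (jointG1 T q1 qu qx qv qw a1 b1 a b)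
          (fun τ => τ.v (idx T t) = vt ∧ τ.w (idx T t) = wt ∧
            τ.z (idx T (t - 1)) = zt1 ∧ histEv T t τ hy hx hv hw) →
      0 < pr (jointG1 T q1 qu qx qv qw a1 b1 a b)
          (fun τ => τ.x (idx T t) = xstar ∧ τ.v (idx T t) = vt ∧ τ.w (idx T t) = wt ∧
            τ.z (idx T (t - 1)) = zt1 ∧ histEv T t τ hy hx hv hw)) :
    ∀ yv : Y,
      (pr (doxG1 T {t} (fun _ => xstar) q1 qu qx qv qw a1 b1 a b)
          (fun τ => τ.y (idx T t) = yv) =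
        ∑ vt : V, ∑ wt : W, ∑ zt1 : Z, ∑ hy : Fin t → Y, ∑ hx : Fin t → X,
          ∑ hv : Fin t → V, ∑ hw : Fin t → W,
          cpr (jointG1 T q1 qu qx qv qw a1 b1 a b) (fun τ => τ.y (idx T t) = yv)
            (fun τ => τ.x (idx T t) = xstar ∧ τ.v (idx T t) = vt ∧ τ.w (idx T t) = wt ∧
              τ.z (idx T (t - 1)) = zt1 ∧ histEv T t τ hy hx hv hw) *
          pr (jointG1 T q1 qu qx qv qw a1 b1 a b)
            (fun τ => τ.v (idx T t) = vt ∧ τ.w (idx T t) = wt ∧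
              τ.z (idx T (t - 1)) = zt1 ∧ histEv T t τ hy hx hv hw)) ∧
      (pr (doxG1 T {t} (fun _ => xstar) q1 qu qx qv qw a1 b1 a b)
          (fun τ => τ.y (idx T t) = yv) =
        ∑ vt : V, ∑ wt : W, ∑ zt1 : Z, ∑ hy : Fin t → Y, ∑ hx : Fin t → X,
          ∑ hv : Fin t → V, ∑ hw : Fin t → W,
          (∑ zt : Z, b t yv zt xstar vt (hy ⟨t - 1, by omega⟩) *
              a t zt xstar wt zt1 (hy ⟨t - 1, by omega⟩)) *
          pr (jointG1 T q1 qu qx qv qw a1 b1 a b)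
            (fun τ => τ.v (idx T t) = vt ∧ τ.w (idx T t) = wt ∧
              τ.z (idx T (t - 1)) = zt1 ∧ histEv T t τ hy hx hv hw)) := by
  intro yv
  obtain ⟨n, rfl⟩ : ∃ n, t = n + 1 := ⟨t - 1, by omega⟩
  have hn : 1 ≤ n := by omega
  simp only [Nat.add_sub_cancel] at hpos ⊢
  set P := jointG1 T q1 qu qx qv qw a1 b1 a b with hP
  have hPd : P = doxG1 T ∅ (fun _ => xstar) q1 qu qx qv qw a1 b1 a b := by
    funext τ
    exact hjoint T _ q1 qu qx qv qw a1 b1 a b τ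
  set hh : X → V → W → Z → Y → ℝ := fun x v w z y =>
    ∑ zt : Z, b (n + 1) yv zt x v y * a (n + 1) zt x w z y with hhh
  have hinner1 : ∀ (x : X) (v : V) (w : W) (z0 : Z) (y0 : Y),
      ∑ z, a (n + 1) z x w z0 y0 * ∑ y, b (n + 1) y z x v y0 * (if y = yv then (1 : ℝ) else 0)
        = hh x v w z0 y0 := by
    intro x v w z0 y0
    simp [hhh, mul_comm]
  have hinner2 : ∀ (x : X) (v : V) (w : W) (z0 : Z) (y0 : Y),
      ∑ z, a (n + 1) z x w z0 y0 * ∑ y, b (n + 1) y z x v y0 * (1 : ℝ) = 1 := by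
    intro x v w z0 y0
    simp only [mul_one, hb (n + 1) ht2 htT, ha (n + 1) ht2 htT]
  -- second identity
  have key2 : pr (doxG1 T {n + 1} (fun _ => xstar) q1 qu qx qv qw a1 b1 a b)
          (fun τ => τ.y (idx T (n + 1)) = yv) =
        ∑ vt : V, ∑ wt : W, ∑ zt1 : Z, ∑ hy : Fin (n + 1) → Y, ∑ hx : Fin (n + 1) → X,
          ∑ hv : Fin (n + 1) → V, ∑ hw : Fin (n + 1) → W,
          hh xstar vt wt zt1 (hy ⟨n, by omega⟩) *
          pr P (fun τ => τ.v (idx T (n + 1)) = vt ∧ τ.w (idx T (n + 1)) = wt ∧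
              τ.z (idx T n) = zt1 ∧ histEv T (n + 1) τ hy hx hv hw) := by
    have e := hpr_collapse (C := V × W × Z × (Fin (n + 1) → Y) × (Fin (n + 1) → X) ×
        (Fin (n + 1) → V) × (Fin (n + 1) → W)) P
      (fun c => hh xstar c.1 c.2.1 c.2.2.1 (c.2.2.2.1 ⟨n, by omega⟩))
      (fun τ => (τ.v (idx T (n + 1)), τ.w (idx T (n + 1)), τ.z (idx T n),
        fun j => τ.y (idx T j.val), fun j => τ.x (idx T j.val), fun j => τ.v (idx T j.val),
        fun j => τ.w (idx T j.val)))
    simp only [Fintype.sum_prod_type, Prod.mk.injEq, funext_iff] at e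
    have e' := hmain T n hn htT ∅ (by simp) (fun _ => xstar) q1 qu qx qv qw a1 b1 a b
      hqu hqx hqv hqw ha hb
      (fun ω => hh xstar (ω (n + 1)).2.2.1 (ω (n + 1)).2.2.2.1 (ω n).2.2.2.2.1 (ω n).2.2.2.2.2)
      (fun ω ω' h => by simp only [h (n + 1) le_rfl, h n (by omega)])
    have e'' := hmain T n hn htT {n + 1} (by simp) (fun _ => xstar) q1 qu qx qv qw a1 b1 a b
      hqu hqx hqv hqw ha hb
      (fun ω => if (ω (n + 1)).2.2.2.2.2 = yv then 1 else 0)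
      (fun ω ω' h => by simp only [h (n + 1) le_rfl])
    rw [← hPd] at e'
    unfold histEv
    refine Eq.trans ?_ e.symm
    refine Eq.trans ?_ e'.symm
    rw [hpr_eq]
    refine Eq.trans ?_ (e''.trans ?_)
    · refine Finset.sum_congr rfl fun τ _ => ?_
      congr 1
      simp only [hpath, hequiv, Equiv.coe_fn_mk]
      congr
    · refine Finset.sum_congr rfl fun σ _ => ?_
      congr 1
      have hne : n ≠ n + 1 := by omega
      simp only [Function.update_self, Function.update_of_ne hne]
      generalize hpath n σ n = p
      have k1 := hkersum {n + 1} (fun _ => xstar) q1 qu qx qv qw a1 b1 a b (n + 1) ht2 p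
        (fun _ _ _ => 1) (fun y => if y = yv then 1 else 0)
      have k2 := hkersum ∅ (fun _ => xstar) q1 qu qx qv qw a1 b1 a b (n + 1) ht2 p
        (fun _ v w => hh xstar v w p.2.2.2.2.1 p.2.2.2.2.2) (fun _ => 1)
      simp only [hinner1] at k1
      simp only [hinner2] at k2
      simp only [one_mul, mul_one] at k1 k2
      rw [k1, k2]
      refine Finset.sum_congr rfl fun u _ => ?_
      refine Finset.sum_congr rfl fun v _ => ?_
      refine Finset.sum_congr rfl fun w _ => ?_
      congr 1
      rw [← Finset.sum_mul]
      simp [hqx]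
  refine ⟨?_, key2⟩
  rw [key2]
  refine Finset.sum_congr rfl fun vt _ => ?_
  refine Finset.sum_congr rfl fun wt _ => ?_
  refine Finset.sum_congr rfl fun zt1 _ => ?_
  refine Finset.sum_congr rfl fun hy _ => ?_
  refine Finset.sum_congr rfl fun hx _ => ?_
  refine Finset.sum_congr rfl fun hv _ => ?_
  refine Finset.sum_congr rfl fun hw _ => ?_
  have hPnn : ∀ τ, 0 ≤ P τ := by
    intro τ
    rw [hP]
    unfold jointG1
    refine mul_nonneg (mul_nonneg (mul_nonneg ?_ ?_) ?_) ?_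
    · split_ifs <;> norm_num
    · exact mul_nonneg (hq1.1 _) (Finset.prod_nonneg fun j _ => (hqu _).1 _)
    · exact Finset.prod_nonneg fun j _ =>
        mul_nonneg (mul_nonneg ((hqx _).1 _) ((hqv _).1 _)) ((hqw _).1 _)
    · refine mul_nonneg (mul_nonneg ((ha1 _ _).1 _) ((hb1 _ _ _).1 _))
        (Finset.prod_nonneg fun j hj => ?_)
      have := Finset.mem_Icc.mp hj
      exact mul_nonneg ((ha j this.1 this.2 _ _ _ _).1 _) ((hb j this.1 this.2 _ _ _ _).1 _)
  have hprnn : ∀ E, 0 ≤ pr P E := by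
    intro E
    unfold pr
    refine Finset.sum_nonneg fun τ _ => ?_
    split_ifs
    · exact hPnn τ
    · exact le_rfl
  rcases (hprnn (fun τ => τ.v (idx T (n + 1)) = vt ∧ τ.w (idx T (n + 1)) = wt ∧
              τ.z (idx T n) = zt1 ∧ histEv T (n + 1) τ hy hx hv hw)).eq_or_lt with h0 | h0
  · rw [← h0, mul_zero, mul_zero]
  have hx0 := hpos vt wt zt1 hy hx hv hw h0
  congr 1
  rw [cpr, eq_div_iff hx0.ne', hpr_eq, hpr_eq]
  classical
  -- the past event
  let Q : (ℕ → U × X × V × W × Z × Y) → Prop := fun ω =>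
    (ω n).2.2.2.2.1 = zt1 ∧ (∀ j : Fin (n + 1), (ω j.val).2.2.2.2.2 = hy j) ∧
      (∀ j : Fin (n + 1), (ω j.val).2.1 = hx j) ∧
      (∀ j : Fin (n + 1), (ω j.val).2.2.1 = hv j) ∧
      (∀ j : Fin (n + 1), (ω j.val).2.2.2.1 = hw j)
  have hQ : ∀ ω ω' : ℕ → U × X × V × W × Z × Y, (∀ j ≤ n, ω j = ω' j) → Q ω = Q ω' := by
    intro ω ω' h
    have hj : ∀ j : Fin (n + 1), ω j.val = ω' j.val := fun j => h _ (by omega)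
    simp only [Q, h n le_rfl, hj]
  let φ : X → V → W → ℝ := fun x v w => if x = xstar ∧ v = vt ∧ w = wt then 1 else 0
  have m : ∀ ψ : Y → ℝ, _ := fun ψ =>
      hmain T n hn htT ∅ (by simp) (fun _ => xstar) q1 qu qx qv qw a1 b1 a b
      hqu hqx hqv hqw ha hb
      (fun ω => (if Q ω then 1 else 0) *
        (φ (ω (n + 1)).2.1 (ω (n + 1)).2.2.1 (ω (n + 1)).2.2.2.1 * ψ (ω (n + 1)).2.2.2.2.2))
      (fun ω ω' h => by
        simp only [h (n + 1) le_rfl, hQ ω ω' (fun j hj => h j (by omega))])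
  rw [← hPd] at m
  have m1 := m (fun _ => 1)
  have m2 := m (fun y => if y = yv then 1 else 0)
  have c1 : ∑ τ, P τ * (if τ.x (idx T (n + 1)) = xstar ∧ τ.v (idx T (n + 1)) = vt ∧
      τ.w (idx T (n + 1)) = wt ∧ τ.z (idx T n) = zt1 ∧ histEv T (n + 1) τ hy hx hv hw
      then (1 : ℝ) else 0) = _ := Eq.trans (Finset.sum_congr rfl fun τ _ => by
        congr 1
        refine hite1 ?_
        simp only [Q, hpath, hequiv, Equiv.coe_fn_mk, histEv]
        tauto) m1
  have c2 : ∑ τ, P τ * (if τ.y (idx T (n + 1)) = yv ∧ τ.x (idx T (n + 1)) = xstar ∧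
      τ.v (idx T (n + 1)) = vt ∧
      τ.w (idx T (n + 1)) = wt ∧ τ.z (idx T n) = zt1 ∧ histEv T (n + 1) τ hy hx hv hw
      then (1 : ℝ) else 0) = _ := Eq.trans (Finset.sum_congr rfl fun τ _ => by
        congr 1
        refine hite2 ?_
        simp only [Q, hpath, hequiv, Equiv.coe_fn_mk, histEv]
        tauto) m2
  refine Eq.trans (congrArg _ (Eq.trans ?_ c1)) (Eq.trans ?_ (c2.symm.trans ?_))
  · refine Finset.sum_congr rfl fun τ _ => ?_
    congr
  · rw [Finset.mul_sum]
    refine Finset.sum_congr rfl fun σ _ => ?_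
    rw [mul_left_comm]
    congr 1
    have hQu : ∀ s, Q (Function.update (hpath n σ) (n + 1) s) = Q (hpath n σ) := fun s =>
      hQ _ _ fun j hj => Function.update_of_ne (by omega) _ _
    simp only [hQu, Function.update_self]
    by_cases hq : Q (hpath n σ)
    · simp only [if_pos hq, one_mul]
      have hz : (hpath n σ n).2.2.2.2.1 = zt1 := hq.1
      have hyn : (hpath n σ n).2.2.2.2.2 = hy ⟨n, by omega⟩ := hq.2.1 ⟨n, by omega⟩
      rw [← hz, ← hyn]
      generalize hpath n σ n = p
      have k1 := hkersum ∅ (fun _ => xstar) q1 qu qx qv qw a1 b1 a b (n + 1) ht2 p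
        φ (fun y => if y = yv then 1 else 0)
      have k2 := hkersum ∅ (fun _ => xstar) q1 qu qx qv qw a1 b1 a b (n + 1) ht2 p
        φ (fun _ => 1)
      simp only [hinner1] at k1
      simp only [hinner2] at k2
      rw [k1, k2]
      simp only [Finset.mul_sum]
      refine Finset.sum_congr rfl fun u _ => ?_
      refine Finset.sum_congr rfl fun v _ => ?_
      refine Finset.sum_congr rfl fun w _ => ?_
      refine Finset.sum_congr rfl fun x _ => ?_
      by_cases hc : x = xstar ∧ v = vt ∧ w = wt
      · obtain ⟨rfl, rfl, rfl⟩ := hc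
        ring
      · simp only [φ, if_neg hc]
        ring
    · simp only [if_neg hq, zero_mul, mul_zero, Finset.sum_const_zero]
  · refine Finset.sum_congr rfl fun τ _ => ?_
    congr
end

section
/- Under the causal model G1, fix a time index t with 2 ≤ t ≤ T and an intervention value w* for the transition covariate. Let C' range over configurations c = (x_t, v_t, z_{t−1}, S_{t−1}). Assuming that P(w_t = w*, c) > 0 for every configuration c with P(c) > 0, the interventional marginal satisfies P(y_t = y | do(w_t = w*)) = Σ_c P(y_t = y | w_t = w*, c) P(c) = Σ_c Σ_{z_t} b_t(y | z_t, x_t, v_t, y_{t−1}) a_t(z_t | x_t, w*, z_{t−1}, y_{t−1}) P(c), for every value y. -/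
open Finset

variable {U X V W Z Y : Type}
  [Fintype U] [Fintype X] [Fintype V] [Fintype W] [Fintype Z] [Fintype Y]
  [DecidableEq U] [DecidableEq X] [DecidableEq V] [DecidableEq W] [DecidableEq Z] [DecidableEq Y]
  [Inhabited U] [Inhabited X] [Inhabited V] [Inhabited W] [Inhabited Z] [Inhabited Y]

variable {U X V W Z Y : Type}
  [Fintype U] [Fintype X] [Fintype V] [Fintype W] [Fintype Z] [Fintype Y]
  [DecidableEq U] [DecidableEq X] [DecidableEq V] [DecidableEq W] [DecidableEq Z]
  [DecidableEq Y]
  [Inhabited U] [Inhabited X] [Inhabited V] [Inhabited W] [Inhabited Z] [Inhabited Y]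

/-- Interventional pmf of G1 under do(w_j = ws j) for j ∈ J: the truncated factorization,
with the factors q_w(w_j | u_j), j ∈ J, deleted and w_j fixed to ws j. -/
noncomputable def dowG1 (T : ℕ) (J : Finset ℕ) (ws : ℕ → W)
    (q1 : U → ℝ) (qu : U → U → ℝ) (qx : X → U → ℝ) (qv : V → U → ℝ) (qw : W → U → ℝ)
    (a1 : Z → X → W → ℝ) (b1 : Y → Z → X → V → ℝ)
    (a : ℕ → Z → X → W → Z → Y → ℝ) (b : ℕ → Y → Z → X → V → Y → ℝ)
    (τ : Traj U X V W Z Y T) : ℝ :=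
  (if τ.u (idx T 0) = default ∧ τ.x (idx T 0) = default ∧ τ.v (idx T 0) = default ∧
      τ.w (idx T 0) = default ∧ τ.z (idx T 0) = default ∧ τ.y (idx T 0) = default
    then 1 else 0) *
  (q1 (τ.u (idx T 1)) * ∏ j ∈ Finset.Icc 2 T, qu (τ.u (idx T j)) (τ.u (idx T (j - 1)))) *
  (∏ j ∈ Finset.Icc 1 T,
    (qx (τ.x (idx T j)) (τ.u (idx T j)) * qv (τ.v (idx T j)) (τ.u (idx T j)) *
      (if j ∈ J then (if τ.w (idx T j) = ws j then 1 else 0)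
        else qw (τ.w (idx T j)) (τ.u (idx T j))))) *
  (a1 (τ.z (idx T 1)) (τ.x (idx T 1)) (τ.w (idx T 1)) *
    b1 (τ.y (idx T 1)) (τ.z (idx T 1)) (τ.x (idx T 1)) (τ.v (idx T 1)) *
    ∏ j ∈ Finset.Icc 2 T,
      (a j (τ.z (idx T j)) (τ.x (idx T j)) (τ.w (idx T j)) (τ.z (idx T (j - 1)))
          (τ.y (idx T (j - 1))) *
        b j (τ.y (idx T j)) (τ.z (idx T j)) (τ.x (idx T j)) (τ.v (idx T j))
          (τ.y (idx T (j - 1)))))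


section Helpers

set_option linter.unusedSectionVars false

/-- State at one time. -/
abbrev StT (U X V W Z Y : Type) := U × X × V × W × Z × Y

def stAt {T : ℕ} (τ : Traj U X V W Z Y T) (i : Fin (T + 1)) : StT U X V W Z Y :=
  (τ.u i, τ.x i, τ.v i, τ.w i, τ.z i, τ.y i)

def updAt {T : ℕ} (τ : Traj U X V W Z Y T) (i : Fin (T + 1)) (s : StT U X V W Z Y) :
    Traj U X V W Z Y T where
  u := Function.update τ.u i s.1
  x := Function.update τ.x i s.2.1
  v := Function.update τ.v i s.2.2.1
  w := Function.update τ.w i s.2.2.2.1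
  z := Function.update τ.z i s.2.2.2.2.1
  y := Function.update τ.y i s.2.2.2.2.2

theorem stAt_updAt_same {T : ℕ} (τ : Traj U X V W Z Y T) (i : Fin (T + 1))
    (s : StT U X V W Z Y) : stAt (updAt τ i s) i = s := by
  simp [stAt, updAt]

theorem stAt_updAt_ne {T : ℕ} (τ : Traj U X V W Z Y T) {i j : Fin (T + 1)} (h : j ≠ i)
    (s : StT U X V W Z Y) : stAt (updAt τ i s) j = stAt τ j := by
  simp [stAt, updAt, h]

theorem idx_ne {T i j : ℕ} (hi : i ≤ T) (hj : j ≤ T) (h : i ≠ j) : idx T i ≠ idx T j := by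
  simp [idx, Fin.ext_iff, hi, hj, h]

/-- Resummation over a single time coordinate. -/
theorem sum_updAt {T : ℕ} (F : Traj U X V W Z Y T → ℝ) (i : Fin (T + 1)) :
    ∑ τ, ∑ s, F (updAt τ i s) = (Fintype.card (StT U X V W Z Y) : ℝ) * ∑ τ, F τ := by
  have hinv : Function.Involutive
      (fun p : Traj U X V W Z Y T × StT U X V W Z Y => (updAt p.1 i p.2, stAt p.1 i)) := by
    rintro ⟨τ, s⟩
    simp [updAt, stAt]
  rw [← Fintype.sum_prod_type' (f := fun τ s => F (updAt τ i s))]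
  rw [← Equiv.sum_comp (Function.Involutive.toPerm _ hinv)]
  have : ∀ p : Traj U X V W Z Y T × StT U X V W Z Y,
      F (updAt (Function.Involutive.toPerm _ hinv p).1 i (Function.Involutive.toPerm _ hinv p).2) = F p.1 := by
    rintro ⟨τ, s⟩
    simp [updAt, stAt]
  simp only [this]
  rw [Fintype.sum_prod_type]
  simp [Finset.mul_sum]

def pin0 {T : ℕ} (τ : Traj U X V W Z Y T) : ℝ :=
  if τ.u (idx T 0) = default ∧ τ.x (idx T 0) = default ∧ τ.v (idx T 0) = default ∧
      τ.w (idx T 0) = default ∧ τ.z (idx T 0) = default ∧ τ.y (idx T 0) = default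
    then 1 else 0

def chainQ {T : ℕ} (K : ℕ → StT U X V W Z Y → StT U X V W Z Y → ℝ) (n : ℕ)
    (τ : Traj U X V W Z Y T) : ℝ :=
  pin0 τ * ∏ j ∈ Finset.Icc 1 n, K j (stAt τ (idx T j)) (stAt τ (idx T (j - 1)))

theorem pin0_updAt {T : ℕ} (τ : Traj U X V W Z Y T) {i : Fin (T + 1)} (h : idx T 0 ≠ i)
    (s : StT U X V W Z Y) : pin0 (updAt τ i s) = pin0 τ := by
  simp [pin0, updAt, h]

theorem chainQ_updAt_succ {T n : ℕ} (hn : n + 1 ≤ T)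
    (K : ℕ → StT U X V W Z Y → StT U X V W Z Y → ℝ)
    (τ : Traj U X V W Z Y T) (s : StT U X V W Z Y) :
    chainQ K (n + 1) (updAt τ (idx T (n + 1)) s) =
      chainQ K n τ * K (n + 1) s (stAt τ (idx T n)) := by
  unfold chainQ
  rw [Finset.prod_Icc_succ_top (by omega), pin0_updAt τ (idx_ne (by omega) hn (by omega)),
    stAt_updAt_same, Nat.add_sub_cancel, stAt_updAt_ne τ (idx_ne (by omega) hn (by omega)),
    mul_assoc]
  congr 2
  refine Finset.prod_congr rfl fun j hj => ?_
  rw [Finset.mem_Icc] at hj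
  rw [stAt_updAt_ne τ (idx_ne (by omega) hn (by omega)),
    stAt_updAt_ne τ (idx_ne (by omega) hn (by omega))]

theorem chainQ_future {T t : ℕ}
    (K : ℕ → StT U X V W Z Y → StT U X V W Z Y → ℝ)
    (hK : ∀ j, t < j → j ≤ T → ∀ s', ∑ s, K j s s' = 1)
    (f : Traj U X V W Z Y T → ℝ)
    (hf : ∀ j, t < j → j ≤ T → ∀ τ s, f (updAt τ (idx T j) s) = f τ)
    (n : ℕ) (htn : t ≤ n) (hnT : n ≤ T) :
    (Fintype.card (StT U X V W Z Y) : ℝ) ^ (n - t) * ∑ τ, f τ * chainQ K n τ =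
      ∑ τ, f τ * chainQ K t τ := by
  induction n, htn using Nat.le_induction with
  | base => simp
  | succ n htn ih =>
    rw [← ih (by omega), Nat.succ_sub htn, pow_succ, mul_assoc]
    congr 1
    rw [← sum_updAt _ (idx T (n + 1))]
    refine Finset.sum_congr rfl fun τ _ => ?_
    simp only [chainQ_updAt_succ hnT, hf (n + 1) (by omega) hnT]
    rw [← Finset.mul_sum, ← Finset.mul_sum, hK (n + 1) (by omega) hnT, mul_one]

/-- Comparison of two chains that agree before time `t`. -/
theorem chainQ_compare {T t : ℕ} (ht : 1 ≤ t) (htT : t ≤ T)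
    (K K' : ℕ → StT U X V W Z Y → StT U X V W Z Y → ℝ)
    (hK : ∀ j, t < j → j ≤ T → ∀ s', ∑ s, K j s s' = 1)
    (hK' : ∀ j, t < j → j ≤ T → ∀ s', ∑ s, K' j s s' = 1)
    (hKK : ∀ j, j < t → K j = K' j)
    (f g : Traj U X V W Z Y T → ℝ)
    (hf : ∀ j, t < j → j ≤ T → ∀ τ s, f (updAt τ (idx T j) s) = f τ)
    (hg : ∀ j, t < j → j ≤ T → ∀ τ s, g (updAt τ (idx T j) s) = g τ)
    (hfg : ∀ τ, ∑ s, f (updAt τ (idx T t) s) * K t s (stAt τ (idx T (t - 1))) =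
      ∑ s, g (updAt τ (idx T t) s) * K' t s (stAt τ (idx T (t - 1)))) :
    ∑ τ, f τ * chainQ K T τ = ∑ τ, g τ * chainQ K' T τ := by
  have hc : (Fintype.card (StT U X V W Z Y) : ℝ) ≠ 0 := by
    exact_mod_cast Fintype.card_ne_zero
  apply mul_left_cancel₀ (pow_ne_zero (T - t) hc)
  rw [chainQ_future K hK f hf T htT le_rfl, chainQ_future K' hK' g hg T htT le_rfl]
  apply mul_left_cancel₀ hc
  rw [← sum_updAt _ (idx T t), ← sum_updAt _ (idx T t)]
  refine Finset.sum_congr rfl fun τ _ => ?_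
  obtain ⟨n, rfl⟩ : ∃ n, t = n + 1 := ⟨t - 1, by omega⟩
  simp only [chainQ_updAt_succ htT]
  have h1 : chainQ K n τ = chainQ K' n τ := by
    unfold chainQ
    congr 1
    refine Finset.prod_congr rfl fun j hj => ?_
    rw [Finset.mem_Icc] at hj
    rw [hKK j (by omega)]
  have h2 := hfg τ
  rw [Nat.add_sub_cancel] at h2
  calc _ = chainQ K n τ * ∑ s, f (updAt τ (idx T (n + 1)) s) *
        K (n + 1) s (stAt τ (idx T n)) := by
        rw [Finset.mul_sum]; exact Finset.sum_congr rfl fun s _ => by ring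
    _ = chainQ K' n τ * ∑ s, g (updAt τ (idx T (n + 1)) s) *
        K' (n + 1) s (stAt τ (idx T n)) := by rw [h1, h2]
    _ = _ := by
        rw [Finset.mul_sum]; exact Finset.sum_congr rfl fun s _ => by ring

/-- The transition kernel of G1, with a time dependent law of `w`. -/
def kerG (q1 : U → ℝ) (qu : U → U → ℝ) (qx : X → U → ℝ) (qv : V → U → ℝ)
    (qw : ℕ → W → U → ℝ)
    (a1 : Z → X → W → ℝ) (b1 : Y → Z → X → V → ℝ)
    (a : ℕ → Z → X → W → Z → Y → ℝ) (b : ℕ → Y → Z → X → V → Y → ℝ)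
    (j : ℕ) (s s' : StT U X V W Z Y) : ℝ :=
  if j = 1 then
    q1 s.1 * (qx s.2.1 s.1 * (qv s.2.2.1 s.1 * (qw j s.2.2.2.1 s.1 *
      (a1 s.2.2.2.2.1 s.2.1 s.2.2.2.1 * b1 s.2.2.2.2.2 s.2.2.2.2.1 s.2.1 s.2.2.1))))
  else
    qu s.1 s'.1 * (qx s.2.1 s.1 * (qv s.2.2.1 s.1 * (qw j s.2.2.2.1 s.1 *
      (a j s.2.2.2.2.1 s.2.1 s.2.2.2.1 s'.2.2.2.2.1 s'.2.2.2.2.2 *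
        b j s.2.2.2.2.2 s.2.2.2.2.1 s.2.1 s.2.2.1 s'.2.2.2.2.2))))

theorem chainQ_kerG {T : ℕ} (hT : 1 ≤ T)
    (q1 : U → ℝ) (qu : U → U → ℝ) (qx : X → U → ℝ) (qv : V → U → ℝ) (qw : ℕ → W → U → ℝ)
    (a1 : Z → X → W → ℝ) (b1 : Y → Z → X → V → ℝ)
    (a : ℕ → Z → X → W → Z → Y → ℝ) (b : ℕ → Y → Z → X → V → Y → ℝ)
    (τ : Traj U X V W Z Y T) :
    chainQ (kerG q1 qu qx qv qw a1 b1 a b) T τ =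
  pin0 τ *
  (q1 (τ.u (idx T 1)) * ∏ j ∈ Finset.Icc 2 T, qu (τ.u (idx T j)) (τ.u (idx T (j - 1)))) *
  (∏ j ∈ Finset.Icc 1 T,
    (qx (τ.x (idx T j)) (τ.u (idx T j)) * qv (τ.v (idx T j)) (τ.u (idx T j)) *
      qw j (τ.w (idx T j)) (τ.u (idx T j)))) *
  (a1 (τ.z (idx T 1)) (τ.x (idx T 1)) (τ.w (idx T 1)) *
    b1 (τ.y (idx T 1)) (τ.z (idx T 1)) (τ.x (idx T 1)) (τ.v (idx T 1)) *
    ∏ j ∈ Finset.Icc 2 T,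
      (a j (τ.z (idx T j)) (τ.x (idx T j)) (τ.w (idx T j)) (τ.z (idx T (j - 1)))
          (τ.y (idx T (j - 1))) *
        b j (τ.y (idx T j)) (τ.z (idx T j)) (τ.x (idx T j)) (τ.v (idx T j))
          (τ.y (idx T (j - 1))))) := by
  have hI : Finset.Icc 1 T = insert 1 (Finset.Icc 2 T) := by
    ext j; simp only [Finset.mem_Icc, Finset.mem_insert]; omega
  have hn : (1 : ℕ) ∉ Finset.Icc 2 T := by simp
  unfold chainQ
  rw [hI, Finset.prod_insert hn, Finset.prod_insert hn]
  have : ∀ j ∈ Finset.Icc 2 T,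
      kerG q1 qu qx qv qw a1 b1 a b j (stAt τ (idx T j)) (stAt τ (idx T (j - 1))) =
      qu (τ.u (idx T j)) (τ.u (idx T (j - 1))) *
      (qx (τ.x (idx T j)) (τ.u (idx T j)) * qv (τ.v (idx T j)) (τ.u (idx T j)) *
        qw j (τ.w (idx T j)) (τ.u (idx T j))) *
      (a j (τ.z (idx T j)) (τ.x (idx T j)) (τ.w (idx T j)) (τ.z (idx T (j - 1)))
          (τ.y (idx T (j - 1))) *
        b j (τ.y (idx T j)) (τ.z (idx T j)) (τ.x (idx T j)) (τ.v (idx T j))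
          (τ.y (idx T (j - 1)))) := by
    intro j hj
    rw [Finset.mem_Icc] at hj
    simp only [kerG, stAt, if_neg (show j ≠ 1 by omega)]
    ring
  rw [Finset.prod_congr rfl this, Finset.prod_mul_distrib, Finset.prod_mul_distrib]
  simp only [kerG, stAt, if_true]
  ring

theorem kerG_sum {T : ℕ}
    (q1 : U → ℝ) (qu : U → U → ℝ) (qx : X → U → ℝ) (qv : V → U → ℝ) (qw : ℕ → W → U → ℝ)
    (a1 : Z → X → W → ℝ) (b1 : Y → Z → X → V → ℝ)
    (a : ℕ → Z → X → W → Z → Y → ℝ) (b : ℕ → Y → Z → X → V → Y → ℝ)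
    (hqu : ∀ u0, (∑ u', qu u' u0) = 1)
    (hqx : ∀ u0, (∑ x', qx x' u0) = 1)
    (hqv : ∀ u0, (∑ v', qv v' u0) = 1)
    (hqw : ∀ j u0, (∑ w', qw j w' u0) = 1)
    (ha : ∀ j, 2 ≤ j → j ≤ T → ∀ x0 w0 z0 y0, (∑ z', a j z' x0 w0 z0 y0) = 1)
    (hb : ∀ j, 2 ≤ j → j ≤ T → ∀ z0 x0 v0 y0, (∑ y', b j y' z0 x0 v0 y0) = 1)
    (j : ℕ) (h2 : 2 ≤ j) (hT : j ≤ T) (s' : StT U X V W Z Y) :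
    ∑ s, kerG q1 qu qx qv qw a1 b1 a b j s s' = 1 := by
  simp only [kerG, if_neg (show j ≠ 1 by omega), Fintype.sum_prod_type, ← Finset.mul_sum,
    hb j h2 hT, ha j h2 hT, hqw, hqv, hqx, hqu, mul_one]

/-- The kernel of `y_t` given everything before `z_t`. -/
def kap (a : ℕ → Z → X → W → Z → Y → ℝ) (b : ℕ → Y → Z → X → V → Y → ℝ) (t : ℕ) (yv : Y)
    (x : X) (v : V) (w : W) (z' : Z) (y' : Y) : ℝ :=
  ∑ zt : Z, b t yv zt x v y' * a t zt x w z' y'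

theorem pr_eq_sum {α : Type} [Fintype α] (p : α → ℝ) (E : α → Prop) [DecidablePred E] :
    pr p E = ∑ a, (if E a then 1 else 0) * p a := by
  unfold pr
  refine Finset.sum_congr rfl fun a _ => ?_
  by_cases h : E a <;> simp [h]

theorem sum_pr_fiber {α C : Type} [Fintype α] [Fintype C] (p : α → ℝ) (c : α → C)
    (g : C → ℝ) : ∑ k, g k * pr p (fun a => c a = k) = ∑ a, g (c a) * p a := by
  classical
  simp only [pr, Finset.mul_sum]
  rw [Finset.sum_comm]
  refine Finset.sum_congr rfl fun a _ => ?_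
  simp

theorem pr_nonneg {α : Type} [Fintype α] (p : α → ℝ) (hp : ∀ a, 0 ≤ p a) (E : α → Prop) :
    0 ≤ pr p E := by
  unfold pr
  refine Finset.sum_nonneg fun a _ => ?_
  split_ifs
  · exact hp a
  · exact le_rfl

/-- Integrating out `z_t, y_t`. -/
theorem lemmaA {T t : ℕ} (ht2 : 2 ≤ t) (htT : t ≤ T)
    (q1 : U → ℝ) (qu : U → U → ℝ) (qx : X → U → ℝ) (qv : V → U → ℝ) (qw : ℕ → W → U → ℝ)
    (a1 : Z → X → W → ℝ) (b1 : Y → Z → X → V → ℝ)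
    (a : ℕ → Z → X → W → Z → Y → ℝ) (b : ℕ → Y → Z → X → V → Y → ℝ)
    (hqu : ∀ u0, (∑ u', qu u' u0) = 1)
    (hqx : ∀ u0, (∑ x', qx x' u0) = 1)
    (hqv : ∀ u0, (∑ v', qv v' u0) = 1)
    (hqw : ∀ j u0, (∑ w', qw j w' u0) = 1)
    (ha : ∀ j, 2 ≤ j → j ≤ T → ∀ x0 w0 z0 y0, (∑ z', a j z' x0 w0 z0 y0) = 1)
    (hb : ∀ j, 2 ≤ j → j ≤ T → ∀ z0 x0 v0 y0, (∑ y', b j y' z0 x0 v0 y0) = 1)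
    (yv : Y) (h : Traj U X V W Z Y T → ℝ)
    (hfut : ∀ j, t < j → j ≤ T → ∀ τ s, h (updAt τ (idx T j) s) = h τ)
    (hcur : ∀ τ u x v w z y, h (updAt τ (idx T t) (u, x, v, w, z, y)) =
      h (updAt τ (idx T t) (u, x, v, w, default, default))) :
    ∑ τ, ((if τ.y (idx T t) = yv then 1 else 0) * h τ) *
        chainQ (kerG q1 qu qx qv qw a1 b1 a b) T τ =
      ∑ τ, (kap a b t yv (τ.x (idx T t)) (τ.v (idx T t)) (τ.w (idx T t)) (τ.z (idx T (t - 1)))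
          (τ.y (idx T (t - 1))) * h τ) *
        chainQ (kerG q1 qu qx qv qw a1 b1 a b) T τ := by
  have hK := kerG_sum (T := T) q1 qu qx qv qw a1 b1 a b hqu hqx hqv hqw ha hb
  refine chainQ_compare (by omega) htT _ _ (fun j h1 h2 => hK j (by omega) h2)
    (fun j h1 h2 => hK j (by omega) h2) (fun _ _ => rfl) _ _ ?_ ?_ ?_
  · intro j h1 h2 τ s
    have e1 : idx T t ≠ idx T j := idx_ne htT h2 (by omega)
    rw [hfut j h1 h2]
    simp [updAt, e1]
  · intro j h1 h2 τ s
    have e1 : idx T t ≠ idx T j := idx_ne htT h2 (by omega)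
    have e2 : idx T (t - 1) ≠ idx T j := idx_ne (by omega) h2 (by omega)
    rw [hfut j h1 h2]
    simp [updAt, e1, e2]
  · intro τ
    have e2 : idx T (t - 1) ≠ idx T t := idx_ne (by omega) htT (by omega)
    simp only [Fintype.sum_prod_type]
    refine Finset.sum_congr rfl fun u _ => Finset.sum_congr rfl fun x _ =>
      Finset.sum_congr rfl fun v _ => Finset.sum_congr rfl fun w _ => ?_
    simp only [hcur τ u x v w]
    generalize h (updAt τ (idx T t) (u, x, v, w, default, default)) = h0
    simp only [kerG, if_neg (show t ≠ 1 by omega), updAt, Function.update_self,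
      Function.update_of_ne e2, stAt]
    generalize τ.z (idx T (t - 1)) = z'
    generalize τ.y (idx T (t - 1)) = y'
    generalize τ.u (idx T (t - 1)) = u'
    simp only [← Finset.mul_sum, hb t ht2 htT, ha t ht2 htT, mul_one]
    simp only [ite_mul, one_mul, zero_mul, Finset.sum_ite_eq', Finset.mem_univ, if_true]
    rw [kap, Finset.sum_mul, Finset.sum_mul]
    exact Finset.sum_congr rfl fun z _ => by ring

/-- Changing the law of `w_t` does not affect functions not depending on `w_t, z_t, y_t`. -/
theorem lemmaB {T t : ℕ} (ht2 : 2 ≤ t) (htT : t ≤ T)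
    (q1 : U → ℝ) (qu : U → U → ℝ) (qx : X → U → ℝ) (qv : V → U → ℝ) (qw qw' : ℕ → W → U → ℝ)
    (a1 : Z → X → W → ℝ) (b1 : Y → Z → X → V → ℝ)
    (a : ℕ → Z → X → W → Z → Y → ℝ) (b : ℕ → Y → Z → X → V → Y → ℝ)
    (hqu : ∀ u0, (∑ u', qu u' u0) = 1)
    (hqx : ∀ u0, (∑ x', qx x' u0) = 1)
    (hqv : ∀ u0, (∑ v', qv v' u0) = 1)
    (hqw : ∀ j u0, (∑ w', qw j w' u0) = 1)
    (hqw' : ∀ j u0, (∑ w', qw' j w' u0) = 1)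
    (hqq : ∀ j, j < t → qw j = qw' j)
    (ha : ∀ j, 2 ≤ j → j ≤ T → ∀ x0 w0 z0 y0, (∑ z', a j z' x0 w0 z0 y0) = 1)
    (hb : ∀ j, 2 ≤ j → j ≤ T → ∀ z0 x0 v0 y0, (∑ y', b j y' z0 x0 v0 y0) = 1)
    (g : X → V → Z → Y → ℝ) :
    ∑ τ : Traj U X V W Z Y T,
        g (τ.x (idx T t)) (τ.v (idx T t)) (τ.z (idx T (t - 1))) (τ.y (idx T (t - 1))) *
        chainQ (kerG q1 qu qx qv qw a1 b1 a b) T τ =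
      ∑ τ : Traj U X V W Z Y T,
        g (τ.x (idx T t)) (τ.v (idx T t)) (τ.z (idx T (t - 1))) (τ.y (idx T (t - 1))) *
        chainQ (kerG q1 qu qx qv qw' a1 b1 a b) T τ := by
  have hK := kerG_sum (T := T) q1 qu qx qv qw a1 b1 a b hqu hqx hqv hqw ha hb
  have hK' := kerG_sum (T := T) q1 qu qx qv qw' a1 b1 a b hqu hqx hqv hqw' ha hb
  have hg : ∀ j, t < j → j ≤ T → ∀ (τ : Traj U X V W Z Y T) s,
      (fun τ : Traj U X V W Z Y T => g (τ.x (idx T t)) (τ.v (idx T t)) (τ.z (idx T (t - 1)))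
        (τ.y (idx T (t - 1)))) (updAt τ (idx T j) s) =
      (fun τ : Traj U X V W Z Y T => g (τ.x (idx T t)) (τ.v (idx T t)) (τ.z (idx T (t - 1)))
        (τ.y (idx T (t - 1)))) τ := by
    intro j h1 h2 τ s
    have e1 : idx T t ≠ idx T j := idx_ne htT h2 (by omega)
    have e2 : idx T (t - 1) ≠ idx T j := idx_ne (by omega) h2 (by omega)
    simp [updAt, e1, e2]
  refine chainQ_compare (by omega) htT _ _ (fun j h1 h2 => hK j (by omega) h2)
    (fun j h1 h2 => hK' j (by omega) h2) ?_ _ _ hg hg ?_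
  · intro j hj
    funext s s'
    simp only [kerG, hqq j hj]
  · intro τ
    have e2 : idx T (t - 1) ≠ idx T t := idx_ne (by omega) htT (by omega)
    simp only [Fintype.sum_prod_type, kerG, if_neg (show t ≠ 1 by omega), updAt,
      Function.update_self, Function.update_of_ne e2, ← Finset.mul_sum,
      hb t ht2 htT, ha t ht2 htT, hqw, hqw', mul_one]

/-- The conditioning configuration at time `t`. -/
def confAt {T : ℕ} (t : ℕ) (τ : Traj U X V W Z Y T) :
    X × V × Z × (Fin t → Y) × (Fin t → X) × (Fin t → V) × (Fin t → W) :=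
  (τ.x (idx T t), τ.v (idx T t), τ.z (idx T (t - 1)), fun j => τ.y (idx T j.val),
    fun j => τ.x (idx T j.val), fun j => τ.v (idx T j.val), fun j => τ.w (idx T j.val))

theorem confAt_iff {T t : ℕ} (τ : Traj U X V W Z Y T) (xt : X) (vt : V) (zt1 : Z)
    (hy : Fin t → Y) (hx : Fin t → X) (hv : Fin t → V) (hw : Fin t → W) :
    confAt t τ = (xt, vt, zt1, hy, hx, hv, hw) ↔
      (τ.x (idx T t) = xt ∧ τ.v (idx T t) = vt ∧
            τ.z (idx T (t - 1)) = zt1 ∧ histEv T t τ hy hx hv hw) := by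
  simp [confAt, histEv, funext_iff]

end Helpers

/-- Immediate causal effect of w_t, graph G1: with
C' = (x_t, v_t, z_{t-1}, S_{t-1}) and assuming P(w_t = w*, c) > 0 whenever P(c) > 0,
P(y_t = y | do(w_t = w*)) = Σ_c P(y_t = y | w_t = w*, c) P(c)
  = Σ_c Σ_{z_t} b_t(y | z_t, x_t, v_t, y_{t-1}) a_t(z_t | x_t, w*, z_{t-1}, y_{t-1}) P(c). -/
theorem statement_1
    (T t : ℕ) (ht2 : 2 ≤ t) (htT : t ≤ T) (wstar : W)
    (q1 : U → ℝ) (qu : U → U → ℝ) (qx : X → U → ℝ) (qv : V → U → ℝ) (qw : W → U → ℝ)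
    (a1 : Z → X → W → ℝ) (b1 : Y → Z → X → V → ℝ)
    (a : ℕ → Z → X → W → Z → Y → ℝ) (b : ℕ → Y → Z → X → V → Y → ℝ)
    (hq1 : (∀ u', 0 ≤ q1 u') ∧ (∑ u', q1 u') = 1)
    (hqu : ∀ u0, (∀ u', 0 ≤ qu u' u0) ∧ (∑ u', qu u' u0) = 1)
    (hqx : ∀ u0, (∀ x', 0 ≤ qx x' u0) ∧ (∑ x', qx x' u0) = 1)
    (hqv : ∀ u0, (∀ v', 0 ≤ qv v' u0) ∧ (∑ v', qv v' u0) = 1)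
    (hqw : ∀ u0, (∀ w', 0 ≤ qw w' u0) ∧ (∑ w', qw w' u0) = 1)
    (ha1 : ∀ x0 w0, (∀ z', 0 ≤ a1 z' x0 w0) ∧ (∑ z', a1 z' x0 w0) = 1)
    (hb1 : ∀ z0 x0 v0, (∀ y', 0 ≤ b1 y' z0 x0 v0) ∧ (∑ y', b1 y' z0 x0 v0) = 1)
    (ha : ∀ j, 2 ≤ j → j ≤ T → ∀ x0 w0 z0 y0,
      (∀ z', 0 ≤ a j z' x0 w0 z0 y0) ∧ (∑ z', a j z' x0 w0 z0 y0) = 1)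
    (hb : ∀ j, 2 ≤ j → j ≤ T → ∀ z0 x0 v0 y0,
      (∀ y', 0 ≤ b j y' z0 x0 v0 y0) ∧ (∑ y', b j y' z0 x0 v0 y0) = 1)
    (hpos : ∀ (xt : X) (vt : V) (zt1 : Z) (hy : Fin t → Y) (hx : Fin t → X)
        (hv : Fin t → V) (hw : Fin t → W),
      0 < pr (jointG1 T q1 qu qx qv qw a1 b1 a b)
          (fun τ => τ.x (idx T t) = xt ∧ τ.v (idx T t) = vt ∧
            τ.z (idx T (t - 1)) = zt1 ∧ histEv T t τ hy hx hv hw) →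
      0 < pr (jointG1 T q1 qu qx qv qw a1 b1 a b)
          (fun τ => τ.w (idx T t) = wstar ∧ τ.x (idx T t) = xt ∧ τ.v (idx T t) = vt ∧
            τ.z (idx T (t - 1)) = zt1 ∧ histEv T t τ hy hx hv hw)) :
    ∀ yv : Y,
      (pr (dowG1 T {t} (fun _ => wstar) q1 qu qx qv qw a1 b1 a b)
          (fun τ => τ.y (idx T t) = yv) =
        ∑ xt : X, ∑ vt : V, ∑ zt1 : Z, ∑ hy : Fin t → Y, ∑ hx : Fin t → X,
          ∑ hv : Fin t → V, ∑ hw : Fin t → W,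
          cpr (jointG1 T q1 qu qx qv qw a1 b1 a b) (fun τ => τ.y (idx T t) = yv)
            (fun τ => τ.w (idx T t) = wstar ∧ τ.x (idx T t) = xt ∧ τ.v (idx T t) = vt ∧
              τ.z (idx T (t - 1)) = zt1 ∧ histEv T t τ hy hx hv hw) *
          pr (jointG1 T q1 qu qx qv qw a1 b1 a b)
            (fun τ => τ.x (idx T t) = xt ∧ τ.v (idx T t) = vt ∧
              τ.z (idx T (t - 1)) = zt1 ∧ histEv T t τ hy hx hv hw)) ∧
      (pr (dowG1 T {t} (fun _ => wstar) q1 qu qx qv qw a1 b1 a b)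
          (fun τ => τ.y (idx T t) = yv) =
        ∑ xt : X, ∑ vt : V, ∑ zt1 : Z, ∑ hy : Fin t → Y, ∑ hx : Fin t → X,
          ∑ hv : Fin t → V, ∑ hw : Fin t → W,
          (∑ zt : Z, b t yv zt xt vt (hy ⟨t - 1, by omega⟩) *
              a t zt xt wstar zt1 (hy ⟨t - 1, by omega⟩)) *
          pr (jointG1 T q1 qu qx qv qw a1 b1 a b)
            (fun τ => τ.x (idx T t) = xt ∧ τ.v (idx T t) = vt ∧
              τ.z (idx T (t - 1)) = zt1 ∧ histEv T t τ hy hx hv hw)) := by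
  have hqu' := fun u0 => (hqu u0).2
  have hqx' := fun u0 => (hqx u0).2
  have hqv' := fun u0 => (hqv u0).2
  have hqw' : ∀ (j : ℕ) u0, (∑ w', (fun _ => qw : ℕ → W → U → ℝ) j w' u0) = 1 :=
    fun _ u0 => (hqw u0).2
  have ha' := fun j h1 h2 x0 w0 z0 y0 => (ha j h1 h2 x0 w0 z0 y0).2
  have hb' := fun j h1 h2 z0 x0 v0 y0 => (hb j h1 h2 z0 x0 v0 y0).2
  have hT : 1 ≤ T := by omega
  have e2 : idx T (t - 1) ≠ idx T t := idx_ne (by omega) htT (by omega)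
  -- the two laws as chains
  have hJ : jointG1 (U := U) (X := X) (V := V) (W := W) (Z := Z) (Y := Y)
      T q1 qu qx qv qw a1 b1 a b =
      chainQ (kerG q1 qu qx qv (fun _ => qw) a1 b1 a b) T := by
    funext τ
    rw [chainQ_kerG hT]
    rfl
  set qd : ℕ → W → U → ℝ := fun j w' u0 =>
    if j ∈ ({t} : Finset ℕ) then (if w' = wstar then 1 else 0) else qw w' u0 with hqd
  have hD : dowG1 (U := U) (X := X) (V := V) (W := W) (Z := Z) (Y := Y)
      T {t} (fun _ => wstar) q1 qu qx qv qw a1 b1 a b =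
      chainQ (kerG q1 qu qx qv qd a1 b1 a b) T := by
    funext τ
    rw [chainQ_kerG hT]
    rfl
  have hqds : ∀ j u0, (∑ w', qd j w' u0) = 1 := by
    intro j u0
    by_cases hj : j = t
    · simp [hqd, hj]
    · simp [hqd, hj, (hqw u0).2]
  have hJ0 : ∀ τ, 0 ≤ jointG1 (U := U) (X := X) (V := V) (W := W) (Z := Z) (Y := Y)
      T q1 qu qx qv qw a1 b1 a b τ := by
    intro τ
    unfold jointG1
    refine mul_nonneg (mul_nonneg (mul_nonneg ?_ (mul_nonneg (hq1.1 _) ?_)) ?_)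
      (mul_nonneg (mul_nonneg ((ha1 _ _).1 _) ((hb1 _ _ _).1 _)) ?_)
    · split_ifs <;> norm_num
    · exact Finset.prod_nonneg fun j _ => (hqu _).1 _
    · exact Finset.prod_nonneg fun j _ =>
        mul_nonneg (mul_nonneg ((hqx _).1 _) ((hqv _).1 _)) ((hqw _).1 _)
    · refine Finset.prod_nonneg fun j hj => ?_
      rw [Finset.mem_Icc] at hj
      exact mul_nonneg ((ha j hj.1 hj.2 _ _ _ _).1 _) ((hb j hj.1 hj.2 _ _ _ _).1 _)
  intro yv
  -- second formula
  have main2 : pr (dowG1 T {t} (fun _ => wstar) q1 qu qx qv qw a1 b1 a b)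
          (fun τ => τ.y (idx T t) = yv) =
        ∑ xt : X, ∑ vt : V, ∑ zt1 : Z, ∑ hy : Fin t → Y, ∑ hx : Fin t → X,
          ∑ hv : Fin t → V, ∑ hw : Fin t → W,
          (∑ zt : Z, b t yv zt xt vt (hy ⟨t - 1, by omega⟩) *
              a t zt xt wstar zt1 (hy ⟨t - 1, by omega⟩)) *
          pr (jointG1 T q1 qu qx qv qw a1 b1 a b)
            (fun τ => τ.x (idx T t) = xt ∧ τ.v (idx T t) = vt ∧
              τ.z (idx T (t - 1)) = zt1 ∧ histEv T t τ hy hx hv hw) := by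
    have hR := sum_pr_fiber (jointG1 (U := U) (X := X) (V := V) (W := W) (Z := Z) (Y := Y)
      T q1 qu qx qv qw a1 b1 a b) (confAt t)
      (fun c => kap a b t yv c.1 c.2.1 wstar c.2.2.1 (c.2.2.2.1 ⟨t - 1, by omega⟩))
    simp only [Fintype.sum_prod_type, confAt_iff] at hR
    refine Eq.trans ?_ hR.symm
    rw [pr_eq_sum, hD, hJ]
    have hA := lemmaA ht2 htT q1 qu qx qv qd a1 b1 a b hqu' hqx' hqv' hqds ha' hb' yv
      (fun _ => 1) (fun _ _ _ _ _ => rfl) (fun _ _ _ _ _ _ _ => rfl)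
    simp only [mul_one] at hA
    rw [hA]
    have hB := lemmaB ht2 htT q1 qu qx qv qd (fun _ => qw) a1 b1 a b hqu' hqx' hqv' hqds hqw'
      (by intro j hj; funext w' u0; simp [hqd, hj.ne]) ha' hb'
      (fun x v z y => kap a b t yv x v wstar z y)
    refine Eq.trans ?_ hB
    refine Finset.sum_congr rfl fun τ _ => ?_
    by_cases hw : τ.w (idx T t) = wstar
    · rw [hw]
    · have h0 : chainQ (kerG q1 qu qx qv qd a1 b1 a b) T τ = 0 := by
        unfold chainQ
        rw [Finset.prod_eq_zero (i := t) (Finset.mem_Icc.2 ⟨by omega, htT⟩), mul_zero]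
        simp [kerG, show t ≠ 1 by omega, stAt, hqd, hw]
      rw [h0, mul_zero, mul_zero]
  refine ⟨?_, main2⟩
  rw [main2]
  refine Finset.sum_congr rfl fun xt _ => Finset.sum_congr rfl fun vt _ =>
    Finset.sum_congr rfl fun zt1 _ => Finset.sum_congr rfl fun hy _ =>
    Finset.sum_congr rfl fun hx _ => Finset.sum_congr rfl fun hv _ =>
    Finset.sum_congr rfl fun hw _ => ?_
  rcases (pr_nonneg _ hJ0 (fun τ => τ.x (idx T t) = xt ∧ τ.v (idx T t) = vt ∧
      τ.z (idx T (t - 1)) = zt1 ∧ histEv T t τ hy hx hv hw)).eq_or_lt with h0 | h0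
  · rw [← h0, mul_zero, mul_zero]
  congr 1
  have hp := hpos xt vt zt1 hy hx hv hw h0
  rw [cpr, eq_div_iff hp.ne']
  classical
  rw [pr_eq_sum, pr_eq_sum, hJ, Finset.mul_sum]
  have key : ∀ i : Fin (T + 1), (∀ j : ℕ, j < t → idx T j ≠ i) →
      ∀ (τ : Traj U X V W Z Y T) s, histEv T t (updAt τ i s) hy hx hv hw ↔
        histEv T t τ hy hx hv hw := by
    intro i hi τ s
    have : ∀ j : Fin t, idx T j.val ≠ i := fun j => hi j.val j.isLt
    simp [histEv, updAt, Function.update_of_ne, this]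
  have hA := lemmaA ht2 htT q1 qu qx qv (fun _ => qw) a1 b1 a b hqu' hqx' hqv' hqw' ha' hb' yv
    (fun τ => if (τ.w (idx T t) = wstar ∧ τ.x (idx T t) = xt ∧ τ.v (idx T t) = vt ∧
      τ.z (idx T (t - 1)) = zt1 ∧ histEv T t τ hy hx hv hw) then 1 else 0) ?_ ?_
  · refine Eq.trans ?_ (Eq.trans hA.symm ?_)
    · refine Finset.sum_congr rfl fun τ _ => ?_
      rw [← mul_assoc]
      congr 1
      split_ifs with hE
      · obtain ⟨h1, h2, h3, h4, h5⟩ := hE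
        have h6 := h5.1 ⟨t - 1, by omega⟩
        simp only at h6
        rw [h1, h2, h3, h4, h6]
        rfl
      · simp
    · refine Finset.sum_congr rfl fun τ _ => ?_
      congr 1
      by_cases h1 : τ.y (idx T t) = yv <;> simp [h1]
  · intro j h1 h2 τ s
    have e1 : idx T t ≠ idx T j := idx_ne htT h2 (by omega)
    have e3 : idx T (t - 1) ≠ idx T j := idx_ne (by omega) h2 (by omega)
    simp only [key (idx T j) (fun i hi => idx_ne (by omega) h2 (by omega))]
    simp only [updAt, Function.update_of_ne e1, Function.update_of_ne e3]
  · intro τ u x v w z y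
    simp only [key (idx T t) (fun i hi => idx_ne (by omega) htT (by omega))]
    simp only [updAt, Function.update_of_ne e2, Function.update_self]
end

section
/- Under the causal model G1, fix 2 ≤ t ≤ t+k ≤ T and intervention values x*_{t:t+k}. Let C range over configurations c = (v_{t:t+k}, w_{t:t+k}, z_{t−1}, S_{t−1}). Assuming that P(x_{t:t+k} = x*_{t:t+k}, c) > 0 for every configuration c with P(c) > 0, the interventional joint distribution of (y_{t+k}, z_{t+k}) satisfies, for every pair of values (y, z): P(y_{t+k} = y, z_{t+k} = z | do(x_{t:t+k} = x*_{t:t+k})) = Σ_c P(y_{t+k} = y, z_{t+k} = z | x_{t:t+k} = x*_{t:t+k}, c) P(c) = Σ_c [ Σ_{y_{t:t+k−1}, z_{t:t+k−1}} ∏_{j=t}^{t+k} b_j(y_j | z_j, x*_j, v_j, y_{j−1}) a_j(z_j | x*_j, w_j, z_{j−1}, y_{j−1}) ] P(c), where in the inner sum y_{t+k} = y and z_{t+k} = z are held fixed. -/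
open Finset

variable {U X V W Z Y : Type}
  [Fintype U] [Fintype X] [Fintype V] [Fintype W] [Fintype Z] [Fintype Y]
  [DecidableEq U] [DecidableEq X] [DecidableEq V] [DecidableEq W] [DecidableEq Z] [DecidableEq Y]
  [Inhabited U] [Inhabited X] [Inhabited V] [Inhabited W] [Inhabited Z] [Inhabited Y]

/-- Extend a tuple g of intermediate values (index i of `Fin k` is time t+i, for a block
of times t..t+k) by a fixed value `last` at the final index. -/
def extWith {β : Type*} (k : ℕ) (g : Fin k → β) (last : β) (i : Fin (k + 1)) : β :=
  if h : i.val < k then g ⟨i.val, h⟩ else last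

/-- The "previous value" map for a block of times t..t+k: at the first index it is
`first` (the value at time t-1), and at index i ≥ 1 it is g (i-1). -/
def shiftFirst {β : Type*} (k : ℕ) (first : β) (g : Fin k → β) (i : Fin (k + 1)) : β :=
  if h : i.val = 0 then first else g ⟨i.val - 1, by have := i.isLt; omega⟩

section Helpers

set_option linter.unusedSectionVars false

/-- Values of a past tuple at a natural time. -/
def pastVal {β : Type} [Inhabited β] {t : ℕ} (p : Fin t → β) (j : ℕ) : β :=
  if h : j < t then p ⟨j, h⟩ else default

/-- Previous value map. -/
def prevVal {β : Type} {n : ℕ} (s0 : β) (g : Fin n → β) (i : Fin n) : β :=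
  if h : i.val = 0 then s0 else g ⟨i.val - 1, by have := i.isLt; omega⟩

/-- Glue past, block and future. -/
def glue {β : Type} {t k n : ℕ} (p : Fin t → β) (b : Fin (k + 1) → β) (f : Fin n → β)
    (i : Fin (t + k + n + 1)) : β :=
  if h : i.val < t then p ⟨i.val, h⟩
  else if h2 : i.val < t + k + 1 then b ⟨i.val - t, by omega⟩
  else f ⟨i.val - (t + k + 1), by have := i.isLt; omega⟩

theorem glue_past {β : Type} [Inhabited β] {t k n : ℕ} (p : Fin t → β) (b : Fin (k + 1) → β)
    (f : Fin n → β) (j : ℕ) (hj : j < t) :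
    glue p b f (idx (t + k + n) j) = pastVal p j := by
  have h1 : min j (t + k + n) = j := by omega
  simp [glue, pastVal, idx, h1, hj]

theorem glue_block {β : Type} {t k n : ℕ} (p : Fin t → β) (b : Fin (k + 1) → β)
    (f : Fin n → β) (i : Fin (k + 1)) :
    glue p b f (idx (t + k + n) (t + i.val)) = b i := by
  have h0 := i.isLt
  have h1 : min (t + i.val) (t + k + n) = t + i.val := by omega
  have h2 : t + i.val < t + k + 1 := by omega
  simp [glue, idx, h1, h2]

theorem glue_fut {β : Type} {t k n : ℕ} (p : Fin t → β) (b : Fin (k + 1) → β)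
    (f : Fin n → β) (i : Fin n) :
    glue p b f (idx (t + k + n) (t + k + 1 + i.val)) = f i := by
  have h0 := i.isLt
  have h1 : min (t + k + 1 + i.val) (t + k + n) = t + k + 1 + i.val := by omega
  have h2 : ¬ (t + k + 1 + i.val < t) := by omega
  have h3 : ¬ (t + k + 1 + i.val < t + k + 1) := by omega
  simp only [glue, idx, h1]
  rw [dif_neg h2, dif_neg h3]
  congr 1; ext; simp

theorem glue_block_prev {β : Type} [Inhabited β] {t k n : ℕ} (ht : 1 ≤ t) (p : Fin t → β)
    (b : Fin (k + 1) → β) (f : Fin n → β) (i : Fin (k + 1)) :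
    glue p b f (idx (t + k + n) (t + i.val - 1)) = prevVal (pastVal p (t - 1)) b i := by
  have h0 := i.isLt
  by_cases hi : i.val = 0
  · have : t + i.val - 1 = t - 1 := by omega
    rw [this, glue_past _ _ _ _ (by omega)]
    simp [prevVal, hi]
  · have : t + i.val - 1 = t + (⟨i.val - 1, by omega⟩ : Fin (k + 1)).val := by
      simp only; omega
    rw [this, glue_block]
    simp [prevVal, hi]

theorem glue_fut_prev {β : Type} {t k n : ℕ} (p : Fin t → β)
    (b : Fin (k + 1) → β) (f : Fin n → β) (i : Fin n) :
    glue p b f (idx (t + k + n) (t + k + 1 + i.val - 1)) = prevVal (b (Fin.last k)) f i := by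
  have h0 := i.isLt
  by_cases hi : i.val = 0
  · have : t + k + 1 + i.val - 1 = t + (Fin.last k).val := by simp; omega
    rw [this, glue_block]
    simp [prevVal, hi]
  · have : t + k + 1 + i.val - 1 = t + k + 1 + (⟨i.val - 1, by omega⟩ : Fin n).val := by
      simp only; omega
    rw [this, glue_fut]
    simp [prevVal, hi]

/-- Splitting of a function into past, block, future. -/
def glueEquiv (β : Type) (t k n : ℕ) :
    (Fin t → β) × (Fin (k + 1) → β) × (Fin n → β) ≃ (Fin (t + k + n + 1) → β) where
  toFun q := glue q.1 q.2.1 q.2.2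
  invFun g := (fun i => g ⟨i.val, by omega⟩, fun i => g ⟨t + i.val, by omega⟩,
    fun i => g ⟨t + k + 1 + i.val, by omega⟩)
  left_inv q := by
    obtain ⟨p, b, f⟩ := q
    refine Prod.ext ?_ (Prod.ext ?_ ?_)
    · funext i; simp [glue]
    · funext i
      have : t + i.val < t + k + 1 := by omega
      simp [glue, this]
    · funext i
      have h2 : ¬ (t + k + 1 + i.val < t) := by omega
      have h3 : ¬ (t + k + 1 + i.val < t + k + 1) := by omega
      simp only [glue]
      rw [dif_neg h2, dif_neg h3]
      congr 1; ext; simp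
  right_inv g := by
    funext i
    by_cases h : i.val < t
    · simp [glue, h]
    · by_cases h2 : i.val < t + k + 1
      · simp only [glue, h, h2, dite_true, dite_false]
        congr 1; ext; simp; omega
      · simp only [glue, h, h2, dite_false]
        congr 1; ext; simp; omega

theorem prod_split {t k n s : ℕ} (F : ℕ → ℝ) (hs : s ≤ t) (ht : 1 ≤ t) :
    ∏ j ∈ Finset.Icc s (t + k + n), F j =
      (∏ j ∈ Finset.Icc s (t - 1), F j) * (∏ i : Fin (k + 1), F (t + i.val)) *
        ∏ i : Fin n, F (t + k + 1 + i.val) := by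
  have e1 : Finset.Icc s (t + k + n) = Finset.Ico s (t + k + n + 1) := by
    ext x; simp only [Finset.mem_Icc, Finset.mem_Ico]; omega
  have e2 : Finset.Icc s (t - 1) = Finset.Ico s t := by
    ext x; simp only [Finset.mem_Icc, Finset.mem_Ico]; omega
  rw [e1, e2, ← Finset.prod_Ico_consecutive F hs (show t ≤ t + k + n + 1 by omega),
    ← Finset.prod_Ico_consecutive F (show t ≤ t + k + 1 by omega)
      (show t + k + 1 ≤ t + k + n + 1 by omega),
    Finset.prod_Ico_eq_prod_range F t (t + k + 1),
    Finset.prod_Ico_eq_prod_range F (t + k + 1) (t + k + n + 1)]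
  have e3 : t + k + 1 - t = k + 1 := by omega
  have e4 : t + k + n + 1 - (t + k + 1) = n := by omega
  rw [e3, e4, Finset.prod_range, Finset.prod_range, mul_assoc]

theorem sum_consF {β : Type} [Fintype β] {n : ℕ} (F : (Fin (n + 1) → β) → ℝ) :
    ∑ g, F g = ∑ s : β, ∑ g : Fin n → β, F (Fin.cons s g) := by
  rw [← Fintype.sum_prod_type']
  exact ((Fin.consEquiv (fun _ : Fin (n + 1) => β)).sum_comp F).symm

theorem sum_snocF {β : Type} [Fintype β] {n : ℕ} (F : (Fin (n + 1) → β) → ℝ) :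
    ∑ g, F g = ∑ s : β, ∑ g : Fin n → β, F (extWith n g s) := by
  rw [← Fintype.sum_prod_type', ← (Fin.snocEquiv (fun _ : Fin (n + 1) => β)).sum_comp F]
  rfl

theorem prevVal_cons_succ {β : Type} {n : ℕ} (s0 s : β) (g : Fin n → β) (i : Fin n) :
    prevVal s0 (Fin.cons s g : Fin (n + 1) → β) i.succ = prevVal s g i := by
  by_cases hi : i.val = 0
  · have : i.succ = ⟨1, by have := i.isLt; omega⟩ := by ext; simp [hi]
    simp only [prevVal, hi, Fin.val_succ, dite_true]
    rw [dif_neg (by omega)]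
    rfl
  · simp only [prevVal, hi, Fin.val_succ, dite_false]
    rw [dif_neg (by omega)]
    have : (⟨i.val + 1 - 1, by have := i.isLt; omega⟩ : Fin (n + 1)) =
      Fin.succ ⟨i.val - 1, by have := i.isLt; omega⟩ := by ext; simp; omega
    rw [this, Fin.cons_succ]

theorem chain_norm {n : ℕ} (R : Fin n → Z → Y → Z → Y → ℝ)
    (hR : ∀ i z0 y0, ∑ z, ∑ y, R i z y z0 y0 = 1) (z0 : Z) (y0 : Y) :
    ∑ gz : Fin n → Z, ∑ gy : Fin n → Y,
      ∏ i, R i (gz i) (gy i) (prevVal z0 gz i) (prevVal y0 gy i) = 1 := by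
  induction n generalizing z0 y0 with
  | zero => simp
  | succ n ih =>
    rw [sum_consF]
    have : ∀ z : Z, ∀ gz : Fin n → Z,
        ∑ gy : Fin (n + 1) → Y, ∏ i, R i ((Fin.cons z gz : Fin (n + 1) → Z) i) (gy i)
          (prevVal z0 (Fin.cons z gz) i) (prevVal y0 gy i) =
        ∑ y : Y, R 0 z y z0 y0 * ∑ gy : Fin n → Y, ∏ i : Fin n, R i.succ (gz i) (gy i)
          (prevVal z gz i) (prevVal y gy i) := by
      intro z gz
      rw [sum_consF]
      refine Finset.sum_congr rfl fun y _ => ?_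
      rw [Finset.mul_sum]
      refine Finset.sum_congr rfl fun gy _ => ?_
      rw [Fin.prod_univ_succ]
      simp only [prevVal_cons_succ, Fin.cons_succ, Fin.cons_zero]
      simp [prevVal]
    simp only [this]
    rw [← hR 0 z0 y0]
    refine Finset.sum_congr rfl fun z _ => ?_
    rw [Finset.sum_comm]
    refine Finset.sum_congr rfl fun y _ => ?_
    rw [← Finset.mul_sum, ih (fun i => R i.succ) (fun i => hR i.succ) z y, mul_one]

theorem sum_prod_fin {n : ℕ} (F : Fin n → X → ℝ) :
    ∑ g : Fin n → X, ∏ i, F i (g i) = ∏ i, ∑ x, F i x := by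
  rw [Finset.prod_univ_sum, Fintype.piFinset_univ]

/-- Pinning of the dummy time. -/
noncomputable def pinW (u : U) (x : X) (v : V) (w : W) (z : Z) (y : Y) : ℝ :=
  if u = default ∧ x = default ∧ v = default ∧ w = default ∧ z = default ∧ y = default
    then 1 else 0

/-- Generic weight with an arbitrary kernel for x. -/
noncomputable def genW (T : ℕ) (ξ : ℕ → X → U → ℝ)
    (q1 : U → ℝ) (qu : U → U → ℝ) (qv : V → U → ℝ) (qw : W → U → ℝ)
    (a1 : Z → X → W → ℝ) (b1 : Y → Z → X → V → ℝ)
    (a : ℕ → Z → X → W → Z → Y → ℝ) (b : ℕ → Y → Z → X → V → Y → ℝ)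
    (τ : Traj U X V W Z Y T) : ℝ :=
  pinW (τ.u (idx T 0)) (τ.x (idx T 0)) (τ.v (idx T 0)) (τ.w (idx T 0)) (τ.z (idx T 0))
    (τ.y (idx T 0)) *
  (q1 (τ.u (idx T 1)) * ∏ j ∈ Finset.Icc 2 T, qu (τ.u (idx T j)) (τ.u (idx T (j - 1)))) *
  (∏ j ∈ Finset.Icc 1 T,
    (ξ j (τ.x (idx T j)) (τ.u (idx T j)) * qv (τ.v (idx T j)) (τ.u (idx T j)) *
      qw (τ.w (idx T j)) (τ.u (idx T j)))) *
  (a1 (τ.z (idx T 1)) (τ.x (idx T 1)) (τ.w (idx T 1)) *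
    b1 (τ.y (idx T 1)) (τ.z (idx T 1)) (τ.x (idx T 1)) (τ.v (idx T 1)) *
    ∏ j ∈ Finset.Icc 2 T,
      (a j (τ.z (idx T j)) (τ.x (idx T j)) (τ.w (idx T j)) (τ.z (idx T (j - 1)))
          (τ.y (idx T (j - 1))) *
        b j (τ.y (idx T j)) (τ.z (idx T j)) (τ.x (idx T j)) (τ.v (idx T j))
          (τ.y (idx T (j - 1)))))

/-- Core variables. -/
abbrev Core (U X V W Z Y : Type) (T t : ℕ) : Type :=
  (Fin (T + 1) → U) × (Fin (T + 1) → V) × (Fin (T + 1) → W) ×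
    (Fin t → X) × (Fin t → Z) × (Fin t → Y)

/-- Assemble a trajectory. -/
def mkTraj {t k n : ℕ} (d : Core U X V W Z Y (t + k + n) t) (xb : Fin (k + 1) → X)
    (zb : Fin (k + 1) → Z) (yb : Fin (k + 1) → Y) (xf : Fin n → X) (zf : Fin n → Z)
    (yf : Fin n → Y) : Traj U X V W Z Y (t + k + n) :=
  ⟨d.1, glue d.2.2.2.1 xb xf, d.2.1, d.2.2.1, glue d.2.2.2.2.1 zb zf, glue d.2.2.2.2.2 yb yf⟩

/-- The splitting equivalence. -/
def mkEquiv (t k n : ℕ) :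
    Core U X V W Z Y (t + k + n) t × (Fin (k + 1) → X) × (Fin (k + 1) → Z) × (Fin (k + 1) → Y) ×
      (Fin n → X) × (Fin n → Z) × (Fin n → Y) ≃ Traj U X V W Z Y (t + k + n) where
  toFun q := mkTraj q.1 q.2.1 q.2.2.1 q.2.2.2.1 q.2.2.2.2.1 q.2.2.2.2.2.1 q.2.2.2.2.2.2
  invFun τ :=
    ((τ.u, τ.v, τ.w, ((glueEquiv X t k n).symm τ.x).1, ((glueEquiv Z t k n).symm τ.z).1,
      ((glueEquiv Y t k n).symm τ.y).1),
      ((glueEquiv X t k n).symm τ.x).2.1, ((glueEquiv Z t k n).symm τ.z).2.1,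
      ((glueEquiv Y t k n).symm τ.y).2.1, ((glueEquiv X t k n).symm τ.x).2.2,
      ((glueEquiv Z t k n).symm τ.z).2.2, ((glueEquiv Y t k n).symm τ.y).2.2)
  left_inv q := by
    obtain ⟨⟨u, v, w, xp, zp, yp⟩, xb, zb, yb, xf, zf, yf⟩ := q
    have hX := (glueEquiv X t k n).left_inv (xp, xb, xf)
    have hZ := (glueEquiv Z t k n).left_inv (zp, zb, zf)
    have hY := (glueEquiv Y t k n).left_inv (yp, yb, yf)
    change (glueEquiv X t k n).symm (glue xp xb xf) = _ at hX
    change (glueEquiv Z t k n).symm (glue zp zb zf) = _ at hZ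
    change (glueEquiv Y t k n).symm (glue yp yb yf) = _ at hY
    simp only [mkTraj, hX, hZ, hY]
  right_inv τ := by
    have hX := (glueEquiv X t k n).right_inv τ.x
    have hZ := (glueEquiv Z t k n).right_inv τ.z
    have hY := (glueEquiv Y t k n).right_inv τ.y
    change glue ((glueEquiv X t k n).symm τ.x).1 ((glueEquiv X t k n).symm τ.x).2.1
      ((glueEquiv X t k n).symm τ.x).2.2 = τ.x at hX
    change glue ((glueEquiv Z t k n).symm τ.z).1 ((glueEquiv Z t k n).symm τ.z).2.1
      ((glueEquiv Z t k n).symm τ.z).2.2 = τ.z at hZ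
    change glue ((glueEquiv Y t k n).symm τ.y).1 ((glueEquiv Y t k n).symm τ.y).2.1
      ((glueEquiv Y t k n).symm τ.y).2.2 = τ.y at hY
    simp only [mkTraj, hX, hZ, hY]

theorem sum_traj (t k n : ℕ) (F : Traj U X V W Z Y (t + k + n) → ℝ) :
    ∑ τ, F τ = ∑ d : Core U X V W Z Y (t + k + n) t, ∑ xb, ∑ zb, ∑ yb, ∑ xf, ∑ zf, ∑ yf,
      F (mkTraj d xb zb yb xf zf yf) := by
  rw [← (mkEquiv t k n).sum_comp F]
  rw [Fintype.sum_prod_type]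
  refine Finset.sum_congr rfl fun d _ => ?_
  rw [Fintype.sum_prod_type]
  refine Finset.sum_congr rfl fun xb _ => ?_
  rw [Fintype.sum_prod_type]
  refine Finset.sum_congr rfl fun zb _ => ?_
  rw [Fintype.sum_prod_type]
  refine Finset.sum_congr rfl fun yb _ => ?_
  rw [Fintype.sum_prod_type]
  refine Finset.sum_congr rfl fun xf _ => ?_
  rw [Fintype.sum_prod_type]
  rfl

/-- One-step transition factor of (z, y). -/
def stepR (a : ℕ → Z → X → W → Z → Y → ℝ) (b : ℕ → Y → Z → X → V → Y → ℝ) {m : ℕ} (s : ℕ)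
    (x : Fin m → X) (v : Fin m → V) (w : Fin m → W) (i : Fin m) (z : Z) (y : Y) (z' : Z) (y' : Y) :
    ℝ :=
  a (s + i.val) z (x i) (w i) z' y' * b (s + i.val) y z (x i) (v i) y'

/-- Weight of the core. -/
noncomputable def coreA (T t : ℕ) (ξ : ℕ → X → U → ℝ)
    (q1 : U → ℝ) (qu : U → U → ℝ) (qv : V → U → ℝ) (qw : W → U → ℝ)
    (a1 : Z → X → W → ℝ) (b1 : Y → Z → X → V → ℝ)
    (a : ℕ → Z → X → W → Z → Y → ℝ) (b : ℕ → Y → Z → X → V → Y → ℝ)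
    (d : Core U X V W Z Y T t) : ℝ :=
  pinW (d.1 (idx T 0)) (pastVal d.2.2.2.1 0) (d.2.1 (idx T 0)) (d.2.2.1 (idx T 0))
    (pastVal d.2.2.2.2.1 0) (pastVal d.2.2.2.2.2 0) *
  (q1 (d.1 (idx T 1)) * ∏ j ∈ Finset.Icc 2 T, qu (d.1 (idx T j)) (d.1 (idx T (j - 1)))) *
  (∏ j ∈ Finset.Icc 1 T, qv (d.2.1 (idx T j)) (d.1 (idx T j))) *
  (∏ j ∈ Finset.Icc 1 T, qw (d.2.2.1 (idx T j)) (d.1 (idx T j))) *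
  (∏ j ∈ Finset.Icc 1 (t - 1), ξ j (pastVal d.2.2.2.1 j) (d.1 (idx T j))) *
  (a1 (pastVal d.2.2.2.2.1 1) (pastVal d.2.2.2.1 1) (d.2.2.1 (idx T 1)) *
    b1 (pastVal d.2.2.2.2.2 1) (pastVal d.2.2.2.2.1 1) (pastVal d.2.2.2.1 1) (d.2.1 (idx T 1)) *
    ∏ j ∈ Finset.Icc 2 (t - 1),
      (a j (pastVal d.2.2.2.2.1 j) (pastVal d.2.2.2.1 j) (d.2.2.1 (idx T j))
          (pastVal d.2.2.2.2.1 (j - 1)) (pastVal d.2.2.2.2.2 (j - 1)) *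
        b j (pastVal d.2.2.2.2.2 j) (pastVal d.2.2.2.2.1 j) (pastVal d.2.2.2.1 j)
          (d.2.1 (idx T j)) (pastVal d.2.2.2.2.2 (j - 1))))

theorem genW_mk {t k n : ℕ} (ht : 2 ≤ t) (ξ : ℕ → X → U → ℝ)
    (q1 : U → ℝ) (qu : U → U → ℝ) (qv : V → U → ℝ) (qw : W → U → ℝ)
    (a1 : Z → X → W → ℝ) (b1 : Y → Z → X → V → ℝ)
    (a : ℕ → Z → X → W → Z → Y → ℝ) (b : ℕ → Y → Z → X → V → Y → ℝ)
    (d : Core U X V W Z Y (t + k + n) t) (xb : Fin (k + 1) → X)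
    (zb : Fin (k + 1) → Z) (yb : Fin (k + 1) → Y) (xf : Fin n → X) (zf : Fin n → Z)
    (yf : Fin n → Y) :
    genW (t + k + n) ξ q1 qu qv qw a1 b1 a b (mkTraj d xb zb yb xf zf yf) =
      coreA (t + k + n) t ξ q1 qu qv qw a1 b1 a b d *
      (∏ i : Fin (k + 1), ξ (t + i.val) (xb i) (d.1 (idx (t + k + n) (t + i.val)))) *
      (∏ i : Fin (k + 1), stepR a b t xb (fun i => d.2.1 (idx (t + k + n) (t + i.val)))
        (fun i => d.2.2.1 (idx (t + k + n) (t + i.val))) i (zb i) (yb i)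
        (prevVal (pastVal d.2.2.2.2.1 (t - 1)) zb i)
        (prevVal (pastVal d.2.2.2.2.2 (t - 1)) yb i)) *
      ((∏ i : Fin n, ξ (t + k + 1 + i.val) (xf i) (d.1 (idx (t + k + n) (t + k + 1 + i.val)))) *
      (∏ i : Fin n, stepR a b (t + k + 1) xf
        (fun i => d.2.1 (idx (t + k + n) (t + k + 1 + i.val)))
        (fun i => d.2.2.1 (idx (t + k + n) (t + k + 1 + i.val))) i (zf i) (yf i)
        (prevVal (zb (Fin.last k)) zf i) (prevVal (yb (Fin.last k)) yf i))) := by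
  obtain ⟨u, v, w, xp, zp, yp⟩ := d
  simp only [genW, coreA, mkTraj, stepR]
  rw [glue_past xp xb xf 0 (by omega), glue_past zp zb zf 0 (by omega),
    glue_past yp yb yf 0 (by omega), glue_past xp xb xf 1 (by omega),
    glue_past zp zb zf 1 (by omega), glue_past yp yb yf 1 (by omega)]
  rw [Finset.prod_mul_distrib, Finset.prod_mul_distrib]
  have e1 := prod_split (t := t) (k := k) (n := n) (s := 1)
    (fun j => ξ j (glue xp xb xf (idx (t + k + n) j)) (u (idx (t + k + n) j)))
    (by omega) (by omega)
  have e2 := prod_split (t := t) (k := k) (n := n) (s := 2)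
    (fun j => a j (glue zp zb zf (idx (t + k + n) j)) (glue xp xb xf (idx (t + k + n) j))
        (w (idx (t + k + n) j)) (glue zp zb zf (idx (t + k + n) (j - 1)))
        (glue yp yb yf (idx (t + k + n) (j - 1))) *
      b j (glue yp yb yf (idx (t + k + n) j)) (glue zp zb zf (idx (t + k + n) j))
        (glue xp xb xf (idx (t + k + n) j)) (v (idx (t + k + n) j))
        (glue yp yb yf (idx (t + k + n) (j - 1))))
    (by omega) (by omega)
  have ht1 : 1 ≤ t := by omega
  simp only [glue_block, glue_fut, glue_fut_prev, glue_block_prev ht1] at e1 e2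
  have p1 : ∏ j ∈ Finset.Icc 1 (t - 1),
      ξ j (glue xp xb xf (idx (t + k + n) j)) (u (idx (t + k + n) j)) =
      ∏ j ∈ Finset.Icc 1 (t - 1), ξ j (pastVal xp j) (u (idx (t + k + n) j)) := by
    refine Finset.prod_congr rfl fun j hj => ?_
    rw [Finset.mem_Icc] at hj
    rw [glue_past _ _ _ j (by omega)]
  have p2 : ∏ j ∈ Finset.Icc 2 (t - 1),
      (a j (glue zp zb zf (idx (t + k + n) j)) (glue xp xb xf (idx (t + k + n) j))
        (w (idx (t + k + n) j)) (glue zp zb zf (idx (t + k + n) (j - 1)))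
        (glue yp yb yf (idx (t + k + n) (j - 1))) *
      b j (glue yp yb yf (idx (t + k + n) j)) (glue zp zb zf (idx (t + k + n) j))
        (glue xp xb xf (idx (t + k + n) j)) (v (idx (t + k + n) j))
        (glue yp yb yf (idx (t + k + n) (j - 1)))) =
      ∏ j ∈ Finset.Icc 2 (t - 1),
      (a j (pastVal zp j) (pastVal xp j) (w (idx (t + k + n) j))
          (pastVal zp (j - 1)) (pastVal yp (j - 1)) *
        b j (pastVal yp j) (pastVal zp j) (pastVal xp j)
          (v (idx (t + k + n) j)) (pastVal yp (j - 1))) := by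
    refine Finset.prod_congr rfl fun j hj => ?_
    rw [Finset.mem_Icc] at hj
    rw [glue_past xp _ _ j (by omega), glue_past yp _ _ j (by omega),
      glue_past zp _ _ j (by omega), glue_past yp _ _ (j - 1) (by omega),
      glue_past zp _ _ (j - 1) (by omega)]
  rw [p1] at e1
  rw [p2] at e2
  rw [e1, e2]
  ring

/-- Inner sum with a test function on the final pair. -/
noncomputable def innerK (t k : ℕ)
    (a : ℕ → Z → X → W → Z → Y → ℝ) (b : ℕ → Y → Z → X → V → Y → ℝ)
    (φ : Z → Y → ℝ) (x : Fin (k + 1) → X) (v : Fin (k + 1) → V) (w : Fin (k + 1) → W)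
    (z0 : Z) (y0 : Y) : ℝ :=
  ∑ zb : Fin (k + 1) → Z, ∑ yb : Fin (k + 1) → Y, φ (zb (Fin.last k)) (yb (Fin.last k)) *
    ∏ i, stepR a b t x v w i (zb i) (yb i) (prevVal z0 zb i) (prevVal y0 yb i)

theorem stepR_sum {m : ℕ} (s T : ℕ) (a : ℕ → Z → X → W → Z → Y → ℝ)
    (b : ℕ → Y → Z → X → V → Y → ℝ)
    (ha : ∀ j, 2 ≤ j → j ≤ T → ∀ x0 w0 z0 y0,
      (∀ z', 0 ≤ a j z' x0 w0 z0 y0) ∧ (∑ z', a j z' x0 w0 z0 y0) = 1)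
    (hb : ∀ j, 2 ≤ j → j ≤ T → ∀ z0 x0 v0 y0,
      (∀ y', 0 ≤ b j y' z0 x0 v0 y0) ∧ (∑ y', b j y' z0 x0 v0 y0) = 1)
    (hs : 2 ≤ s) (hT : s + m ≤ T + 1)
    (x : Fin m → X) (v : Fin m → V) (w : Fin m → W) (i : Fin m) (z0 : Z) (y0 : Y) :
    ∑ z, ∑ y, stepR a b s x v w i z y z0 y0 = 1 := by
  have h0 := i.isLt
  simp only [stepR, ← Finset.mul_sum]
  simp only [(hb (s + i.val) (by omega) (by omega) _ _ _ _).2, mul_one]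
  exact (ha (s + i.val) (by omega) (by omega) _ _ _ _).2

theorem main_split {t k n : ℕ} (ht : 2 ≤ t) (ξ : ℕ → X → U → ℝ)
    (q1 : U → ℝ) (qu : U → U → ℝ) (qv : V → U → ℝ) (qw : W → U → ℝ)
    (a1 : Z → X → W → ℝ) (b1 : Y → Z → X → V → ℝ)
    (a : ℕ → Z → X → W → Z → Y → ℝ) (b : ℕ → Y → Z → X → V → Y → ℝ)
    (hξ : ∀ j u, t + k < j → ∑ x, ξ j x u = 1)
    (ha : ∀ j, 2 ≤ j → j ≤ t + k + n → ∀ x0 w0 z0 y0,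
      (∀ z', 0 ≤ a j z' x0 w0 z0 y0) ∧ (∑ z', a j z' x0 w0 z0 y0) = 1)
    (hb : ∀ j, 2 ≤ j → j ≤ t + k + n → ∀ z0 x0 v0 y0,
      (∀ y', 0 ≤ b j y' z0 x0 v0 y0) ∧ (∑ y', b j y' z0 x0 v0 y0) = 1)
    (φ : Z → Y → ℝ) (g : Traj U X V W Z Y (t + k + n) → ℝ)
    (G : Core U X V W Z Y (t + k + n) t → (Fin (k + 1) → X) → ℝ)
    (hg : ∀ d xb zb yb xf zf yf, g (mkTraj d xb zb yb xf zf yf) = G d xb) :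
    ∑ τ, genW (t + k + n) ξ q1 qu qv qw a1 b1 a b τ *
        (φ (τ.z (idx (t + k + n) (t + k))) (τ.y (idx (t + k + n) (t + k))) * g τ) =
      ∑ d : Core U X V W Z Y (t + k + n) t, ∑ xb : Fin (k + 1) → X,
        coreA (t + k + n) t ξ q1 qu qv qw a1 b1 a b d *
        (∏ i : Fin (k + 1), ξ (t + i.val) (xb i) (d.1 (idx (t + k + n) (t + i.val)))) * G d xb *
        innerK t k a b φ xb (fun i => d.2.1 (idx (t + k + n) (t + i.val)))
          (fun i => d.2.2.1 (idx (t + k + n) (t + i.val)))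
          (pastVal d.2.2.2.2.1 (t - 1)) (pastVal d.2.2.2.2.2 (t - 1)) := by
  rw [sum_traj]
  refine Finset.sum_congr rfl fun d _ => Finset.sum_congr rfl fun xb _ => ?_
  rw [innerK, Finset.mul_sum]
  refine Finset.sum_congr rfl fun zb _ => ?_
  rw [Finset.mul_sum]
  refine Finset.sum_congr rfl fun yb _ => ?_
  have hz : ∀ xf zf yf, (mkTraj d xb zb yb xf zf yf).z (idx (t + k + n) (t + k)) =
      zb (Fin.last k) := fun xf zf yf => glue_block _ zb zf (Fin.last k)
  have hy : ∀ xf zf yf, (mkTraj d xb zb yb xf zf yf).y (idx (t + k + n) (t + k)) =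
      yb (Fin.last k) := fun xf zf yf => glue_block _ yb yf (Fin.last k)
  simp only [hg, hz, hy, genW_mk ht]
  have hc := fun xf => chain_norm (stepR a b (t + k + 1) xf
        (fun i : Fin n => d.2.1 (idx (t + k + n) (t + k + 1 + i.val)))
        (fun i => d.2.2.1 (idx (t + k + n) (t + k + 1 + i.val))))
        (stepR_sum (t + k + 1) (t + k + n) a b ha hb (by omega) (by omega) xf _ _)
        (zb (Fin.last k)) (yb (Fin.last k))
  have hx := sum_prod_fin (fun (i : Fin n) x => ξ (t + k + 1 + i.val) x
    (d.1 (idx (t + k + n) (t + k + 1 + i.val))))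
  rw [Finset.prod_congr rfl (fun i _ => hξ _ _ (by omega)), Finset.prod_const_one] at hx
  simp only [← Finset.sum_mul, ← Finset.mul_sum, hc, mul_one, hx]
  ring

theorem innerK_one {t k n : ℕ} (ht : 2 ≤ t)
    (a : ℕ → Z → X → W → Z → Y → ℝ) (b : ℕ → Y → Z → X → V → Y → ℝ)
    (ha : ∀ j, 2 ≤ j → j ≤ t + k + n → ∀ x0 w0 z0 y0,
      (∀ z', 0 ≤ a j z' x0 w0 z0 y0) ∧ (∑ z', a j z' x0 w0 z0 y0) = 1)
    (hb : ∀ j, 2 ≤ j → j ≤ t + k + n → ∀ z0 x0 v0 y0,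
      (∀ y', 0 ≤ b j y' z0 x0 v0 y0) ∧ (∑ y', b j y' z0 x0 v0 y0) = 1)
    (x : Fin (k + 1) → X) (v : Fin (k + 1) → V) (w : Fin (k + 1) → W)
    (z0 : Z) (y0 : Y) : innerK t k a b (fun _ _ => 1) x v w z0 y0 = 1 := by
  simp only [innerK, one_mul]
  exact chain_norm _ (stepR_sum t (t + k + n) a b ha hb ht (by omega) x v w) z0 y0

theorem prevVal_extWith {β : Type} {k : ℕ} (s0 : β) (g : Fin k → β) (l : β) (i : Fin (k + 1)) :
    prevVal s0 (extWith k g l) i = shiftFirst k s0 g i := by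
  have h0 := i.isLt
  by_cases hi : i.val = 0
  · simp [prevVal, shiftFirst, hi]
  · have : i.val - 1 < k := by omega
    simp [prevVal, shiftFirst, hi, extWith, this]

theorem innerK_ind {t k : ℕ}
    (a : ℕ → Z → X → W → Z → Y → ℝ) (b : ℕ → Y → Z → X → V → Y → ℝ)
    (yv : Y) (zv : Z) (x : Fin (k + 1) → X) (v : Fin (k + 1) → V) (w : Fin (k + 1) → W)
    (z0 : Z) (y0 : Y) :
    innerK t k a b (fun z y => if y = yv ∧ z = zv then 1 else 0) x v w z0 y0 =
    ∑ gy : Fin k → Y, ∑ gz : Fin k → Z,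
      ∏ i : Fin (k + 1),
        (b (t + i.val) (extWith k gy yv i) (extWith k gz zv i) (x i)
            (v i) (shiftFirst k y0 gy i) *
          a (t + i.val) (extWith k gz zv i) (x i) (w i)
            (shiftFirst k z0 gz i) (shiftFirst k y0 gy i)) := by
  have hl : ∀ {β : Type} (g : Fin k → β) (l : β), extWith k g l (Fin.last k) = l := by
    intro β g l; simp [extWith]
  rw [innerK, sum_snocF, Finset.sum_eq_single zv, Finset.sum_comm]
  · rw [sum_snocF, Finset.sum_eq_single yv]
    · refine Finset.sum_congr rfl fun gy _ => Finset.sum_congr rfl fun gz _ => ?_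
      simp only [hl, prevVal_extWith, stepR, and_self, if_true, one_mul]
      exact Finset.prod_congr rfl fun i _ => mul_comm _ _
    · intro y _ hy
      simp [hl, hy]
    · simp
  · intro z _ hz
    simp [hl, hz]
  · simp

theorem sum_pr {α γ : Type} [Fintype α] [Fintype γ] (p : α → ℝ) (C : α → γ) (f : γ → ℝ) :
    ∑ c, f c * pr p (fun τ => C τ = c) = ∑ τ, p τ * f (C τ) := by
  classical
  simp only [pr, Finset.mul_sum]
  rw [Finset.sum_comm]
  refine Finset.sum_congr rfl fun τ _ => ?_
  rw [Finset.sum_eq_single (C τ)]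
  · simp [mul_comm]
  · intro c _ hc; simp [Ne.symm hc]
  · simp

/-- Configuration type. -/
abbrev Cfg (V W Z Y X : Type) (t k : ℕ) : Type :=
  (Fin (k + 1) → V) × (Fin (k + 1) → W) × Z × (Fin t → Y) × (Fin t → X) × (Fin t → V) ×
    (Fin t → W)

/-- Configuration of a trajectory. -/
def cfg (T t k : ℕ) (τ : Traj U X V W Z Y T) : Cfg V W Z Y X t k :=
  (fun i => τ.v (idx T (t + i.val)), fun i => τ.w (idx T (t + i.val)), τ.z (idx T (t - 1)),
    fun j => τ.y (idx T j.val), fun j => τ.x (idx T j.val), fun j => τ.v (idx T j.val),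
    fun j => τ.w (idx T j.val))

/-- Configuration of a core. -/
def cfgCore (T t k : ℕ) (d : Core U X V W Z Y T t) : Cfg V W Z Y X t k :=
  (fun i => d.2.1 (idx T (t + i.val)), fun i => d.2.2.1 (idx T (t + i.val)),
    pastVal d.2.2.2.2.1 (t - 1), d.2.2.2.2.2, d.2.2.2.1, fun j => d.2.1 (idx T j.val),
    fun j => d.2.2.1 (idx T j.val))

theorem pastVal_fin {β : Type} [Inhabited β] {t : ℕ} (p : Fin t → β) (j : Fin t) :
    pastVal p j.val = p j := by
  simp [pastVal]

theorem cfg_mk {t k n : ℕ} (ht : 2 ≤ t) (d : Core U X V W Z Y (t + k + n) t)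
    (xb : Fin (k + 1) → X) (zb : Fin (k + 1) → Z) (yb : Fin (k + 1) → Y) (xf : Fin n → X)
    (zf : Fin n → Z) (yf : Fin n → Y) :
    cfg (t + k + n) t k (mkTraj d xb zb yb xf zf yf) = cfgCore (t + k + n) t k d := by
  have h1 : ∀ {β : Type} [Inhabited β] (p : Fin t → β) (b : Fin (k + 1) → β) (f : Fin n → β),
      (fun j : Fin t => glue p b f (idx (t + k + n) j.val)) = p := by
    intro β _ p b f
    funext j
    rw [glue_past _ _ _ _ j.isLt, pastVal_fin]
  simp only [cfg, cfgCore, mkTraj, h1, glue_past _ _ _ (t - 1) (show t - 1 < t by omega)]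

theorem cfg_iff (T t k : ℕ) (τ : Traj U X V W Z Y T) (hvk : Fin (k + 1) → V)
    (hwk : Fin (k + 1) → W) (zt1 : Z)
    (hy : Fin t → Y) (hx : Fin t → X) (hv : Fin t → V) (hw : Fin t → W) :
    ((∀ i : Fin (k + 1), τ.v (idx T (t + i.val)) = hvk i) ∧
      (∀ i : Fin (k + 1), τ.w (idx T (t + i.val)) = hwk i) ∧
      τ.z (idx T (t - 1)) = zt1 ∧ histEv T t τ hy hx hv hw) ↔
    cfg T t k τ = (hvk, hwk, zt1, hy, hx, hv, hw) := by
  simp only [cfg, histEv, Prod.mk.injEq, funext_iff]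

theorem xev_iff (T t k : ℕ) (τ : Traj U X V W Z Y T) (xs : ℕ → X) :
    (∀ j, t ≤ j → j ≤ t + k → τ.x (idx T j) = xs j) ↔
      (fun i : Fin (k + 1) => τ.x (idx T (t + i.val))) = fun i => xs (t + i.val) := by
  rw [funext_iff]
  constructor
  · intro h i
    exact h _ (by omega) (by omega)
  · intro h j h1 h2
    have := h ⟨j - t, by omega⟩
    have e : t + (j - t) = j := by omega
    simpa only [e] using this

/-- The inner sum as a function of a configuration. -/
noncomputable def Ktot (t k : ℕ) (xs : ℕ → X)
    (a : ℕ → Z → X → W → Z → Y → ℝ) (b : ℕ → Y → Z → X → V → Y → ℝ) (φ : Z → Y → ℝ)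
    (c : Cfg V W Z Y X t k) : ℝ :=
  innerK t k a b φ (fun i => xs (t + i.val)) c.1 c.2.1 c.2.2.1 (pastVal c.2.2.2.1 (t - 1))

theorem coreA_congr (T t : ℕ) (ξ ξ' : ℕ → X → U → ℝ) (h : ∀ j, j < t → ξ j = ξ' j) (ht : 1 ≤ t)
    (q1 : U → ℝ) (qu : U → U → ℝ) (qv : V → U → ℝ) (qw : W → U → ℝ)
    (a1 : Z → X → W → ℝ) (b1 : Y → Z → X → V → ℝ)
    (a : ℕ → Z → X → W → Z → Y → ℝ) (b : ℕ → Y → Z → X → V → Y → ℝ)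
    (d : Core U X V W Z Y T t) :
    coreA T t ξ q1 qu qv qw a1 b1 a b d = coreA T t ξ' q1 qu qv qw a1 b1 a b d := by
  have : ∏ j ∈ Finset.Icc 1 (t - 1), ξ j (pastVal d.2.2.2.1 j) (d.1 (idx T j)) =
      ∏ j ∈ Finset.Icc 1 (t - 1), ξ' j (pastVal d.2.2.2.1 j) (d.1 (idx T j)) := by
    refine Finset.prod_congr rfl fun j hj => ?_
    rw [Finset.mem_Icc] at hj
    rw [h j (by omega)]
  simp only [coreA, this]

theorem pr_eq {α : Type} [Fintype α] (p : α → ℝ) (E : α → Prop) (f : α → ℝ)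
    (h1 : ∀ x, E x → f x = 1) (h0 : ∀ x, ¬ E x → f x = 0) : pr p E = ∑ x, p x * f x := by
  classical
  unfold pr
  refine Finset.sum_congr rfl fun x _ => ?_
  by_cases h : E x
  · simp [h, h1 x h]
  · simp [h, h0 x h]

theorem factI {t k n : ℕ} (ht : 2 ≤ t) (xs : ℕ → X)
    (q1 : U → ℝ) (qu : U → U → ℝ) (qx : X → U → ℝ) (qv : V → U → ℝ) (qw : W → U → ℝ)
    (a1 : Z → X → W → ℝ) (b1 : Y → Z → X → V → ℝ)
    (a : ℕ → Z → X → W → Z → Y → ℝ) (b : ℕ → Y → Z → X → V → Y → ℝ)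
    (hqx : ∀ u0, (∀ x', 0 ≤ qx x' u0) ∧ (∑ x', qx x' u0) = 1)
    (ha : ∀ j, 2 ≤ j → j ≤ t + k + n → ∀ x0 w0 z0 y0,
      (∀ z', 0 ≤ a j z' x0 w0 z0 y0) ∧ (∑ z', a j z' x0 w0 z0 y0) = 1)
    (hb : ∀ j, 2 ≤ j → j ≤ t + k + n → ∀ z0 x0 v0 y0,
      (∀ y', 0 ≤ b j y' z0 x0 v0 y0) ∧ (∑ y', b j y' z0 x0 v0 y0) = 1)
    (yv : Y) (zv : Z) :
    pr (doxG1 (t + k + n) (Finset.Icc t (t + k)) xs q1 qu qx qv qw a1 b1 a b)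
        (fun τ => τ.y (idx (t + k + n) (t + k)) = yv ∧ τ.z (idx (t + k + n) (t + k)) = zv) =
      ∑ τ, jointG1 (t + k + n) q1 qu qx qv qw a1 b1 a b τ *
        Ktot t k xs a b (fun z y => if y = yv ∧ z = zv then 1 else 0)
          (cfg (t + k + n) t k τ) := by
  let ξ : ℕ → X → U → ℝ := fun j x u =>
    if j ∈ Finset.Icc t (t + k) then (if x = xs j then 1 else 0) else qx x u
  let φ : Z → Y → ℝ := fun z y => if y = yv ∧ z = zv then 1 else 0
  have L := main_split (k := k) (n := n) ht ξ q1 qu qv qw a1 b1 a b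
    (by
      intro j u hj
      have : j ∉ Finset.Icc t (t + k) := by simp; omega
      simp only [ξ, if_neg this]
      exact (hqx u).2) ha hb φ (fun _ => 1) (fun _ _ => 1) (fun _ _ _ _ _ _ _ => rfl)
  have R := main_split (k := k) (n := n) ht (fun _ => qx) q1 qu qv qw a1 b1 a b
    (fun j u _ => (hqx u).2) ha hb (fun _ _ => 1)
    (fun τ => Ktot t k xs a b φ (cfg (t + k + n) t k τ))
    (fun d _ => Ktot t k xs a b φ (cfgCore (t + k + n) t k d))
    (fun d xb zb yb xf zf yf => by simp only [cfg_mk ht])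
  rw [pr_eq _ _ (fun τ => φ (τ.z (idx (t + k + n) (t + k))) (τ.y (idx (t + k + n) (t + k))) * 1)
    (by intro τ h; simp [φ, h]) (by intro τ h; simp only [φ, mul_one]; rw [if_neg h])]
  refine L.trans (Eq.trans ?_ (R.symm.trans ?_))
  · refine Finset.sum_congr rfl fun d _ => ?_
    have hx := sum_prod_fin (fun (i : Fin (k + 1)) x => qx x (d.1 (idx (t + k + n) (t + i.val))))
    rw [Finset.prod_congr rfl (fun i _ => (hqx _).2), Finset.prod_const_one] at hx
    simp only [innerK_one ht a b ha hb, mul_one]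
    rw [← Finset.sum_mul, ← Finset.mul_sum, hx, Finset.sum_eq_single (fun i => xs (t + i.val))]
    · have : ∀ i : Fin (k + 1), t + i.val ∈ Finset.Icc t (t + k) := by
        intro i; simp; omega
      have h2 : ∏ i : Fin (k + 1), ξ (t + i.val) (xs (t + i.val))
          (d.1 (idx (t + k + n) (t + i.val))) = 1 := by
        refine Finset.prod_eq_one fun i _ => ?_
        simp only [ξ, if_pos (this i), if_true]
      rw [h2, coreA_congr _ _ ξ (fun _ => qx) _ (by omega), Ktot]
      · rfl
      · intro j hj
        have : j ∉ Finset.Icc t (t + k) := by simp; omega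
        funext x u
        simp only [ξ, if_neg this]
    · intro xb _ hxb
      obtain ⟨i, hi⟩ := Function.ne_iff.1 hxb
      have hi2 : t + i.val ∈ Finset.Icc t (t + k) := by simp; omega
      rw [Finset.prod_eq_zero (Finset.mem_univ i)]
      · simp
      · simp only [ξ, if_pos hi2, if_neg hi]
    · simp
  · simp only [one_mul]
    rfl

theorem factII {t k n : ℕ} (ht : 2 ≤ t) (xs : ℕ → X)
    (q1 : U → ℝ) (qu : U → U → ℝ) (qx : X → U → ℝ) (qv : V → U → ℝ) (qw : W → U → ℝ)
    (a1 : Z → X → W → ℝ) (b1 : Y → Z → X → V → ℝ)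
    (a : ℕ → Z → X → W → Z → Y → ℝ) (b : ℕ → Y → Z → X → V → Y → ℝ)
    (hqx : ∀ u0, (∀ x', 0 ≤ qx x' u0) ∧ (∑ x', qx x' u0) = 1)
    (ha : ∀ j, 2 ≤ j → j ≤ t + k + n → ∀ x0 w0 z0 y0,
      (∀ z', 0 ≤ a j z' x0 w0 z0 y0) ∧ (∑ z', a j z' x0 w0 z0 y0) = 1)
    (hb : ∀ j, 2 ≤ j → j ≤ t + k + n → ∀ z0 x0 v0 y0,
      (∀ y', 0 ≤ b j y' z0 x0 v0 y0) ∧ (∑ y', b j y' z0 x0 v0 y0) = 1)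
    (yv : Y) (zv : Z) (c : Cfg V W Z Y X t k) :
    pr (jointG1 (t + k + n) q1 qu qx qv qw a1 b1 a b)
        (fun τ => (τ.y (idx (t + k + n) (t + k)) = yv ∧ τ.z (idx (t + k + n) (t + k)) = zv) ∧
          (fun i : Fin (k + 1) => τ.x (idx (t + k + n) (t + i.val))) = (fun i => xs (t + i.val)) ∧
          cfg (t + k + n) t k τ = c) =
      Ktot t k xs a b (fun z y => if y = yv ∧ z = zv then 1 else 0) c *
      pr (jointG1 (t + k + n) q1 qu qx qv qw a1 b1 a b)
        (fun τ =>
          (fun i : Fin (k + 1) => τ.x (idx (t + k + n) (t + i.val))) = (fun i => xs (t + i.val)) ∧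
          cfg (t + k + n) t k τ = c) := by
  classical
  let φ : Z → Y → ℝ := fun z y => if y = yv ∧ z = zv then 1 else 0
  let g : Traj U X V W Z Y (t + k + n) → ℝ := fun τ =>
    if (fun i : Fin (k + 1) => τ.x (idx (t + k + n) (t + i.val))) = (fun i => xs (t + i.val)) ∧
      cfg (t + k + n) t k τ = c then 1 else 0
  let G : Core U X V W Z Y (t + k + n) t → (Fin (k + 1) → X) → ℝ := fun d xb =>
    if xb = (fun i => xs (t + i.val)) ∧ cfgCore (t + k + n) t k d = c then 1 else 0
  have hg : ∀ d xb zb yb xf zf yf, g (mkTraj d xb zb yb xf zf yf) = G d xb := by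
    intro d xb zb yb xf zf yf
    have : (fun i : Fin (k + 1) => (mkTraj d xb zb yb xf zf yf).x (idx (t + k + n) (t + i.val)))
        = xb := by
      funext i; exact glue_block _ _ _ i
    simp only [g, G, this, cfg_mk ht]
  have L := main_split (k := k) (n := n) ht (fun _ => qx) q1 qu qv qw a1 b1 a b
    (fun j u _ => (hqx u).2) ha hb φ g G hg
  have R := main_split (k := k) (n := n) ht (fun _ => qx) q1 qu qv qw a1 b1 a b
    (fun j u _ => (hqx u).2) ha hb (fun _ _ => 1) g G hg
  rw [pr_eq _ _ (fun τ => φ (τ.z (idx (t + k + n) (t + k))) (τ.y (idx (t + k + n) (t + k))) * g τ)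
    (by
      intro τ h
      have h1 : φ (τ.z (idx (t + k + n) (t + k))) (τ.y (idx (t + k + n) (t + k))) = 1 :=
        if_pos h.1
      have h2 : g τ = 1 := if_pos h.2
      rw [h1, h2, one_mul])
    (by
      intro τ h
      rcases not_and_or.1 h with h | h
      · have h1 : φ (τ.z (idx (t + k + n) (t + k))) (τ.y (idx (t + k + n) (t + k))) = 0 :=
          if_neg h
        rw [h1, zero_mul]
      · have h2 : g τ = 0 := if_neg h
        rw [h2, mul_zero])]
  rw [pr_eq _ _ (fun τ => 1 * g τ)
    (by
      intro τ h
      have h2 : g τ = 1 := if_pos h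
      rw [h2, one_mul])
    (by
      intro τ h
      have h2 : g τ = 0 := if_neg h
      rw [h2, mul_zero])]
  refine L.trans (Eq.trans ?_ (congrArg _ R.symm))
  rw [Finset.mul_sum]
  refine Finset.sum_congr rfl fun d _ => ?_
  rw [Finset.mul_sum]
  refine Finset.sum_congr rfl fun xb _ => ?_
  rw [innerK_one ht a b ha hb]
  by_cases h : xb = (fun i => xs (t + i.val)) ∧ cfgCore (t + k + n) t k d = c
  · obtain ⟨h1, h2⟩ := h
    rw [← h2, h1, Ktot, mul_one, mul_comm]
    rfl
  · have h2 : G d xb = 0 := if_neg h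
    rw [h2]; simp

theorem joint_nonneg (T : ℕ)
    (q1 : U → ℝ) (qu : U → U → ℝ) (qx : X → U → ℝ) (qv : V → U → ℝ) (qw : W → U → ℝ)
    (a1 : Z → X → W → ℝ) (b1 : Y → Z → X → V → ℝ)
    (a : ℕ → Z → X → W → Z → Y → ℝ) (b : ℕ → Y → Z → X → V → Y → ℝ)
    (hq1 : ∀ u', 0 ≤ q1 u') (hqu : ∀ u' u0, 0 ≤ qu u' u0) (hqx : ∀ x' u0, 0 ≤ qx x' u0)
    (hqv : ∀ v' u0, 0 ≤ qv v' u0) (hqw : ∀ w' u0, 0 ≤ qw w' u0)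
    (ha1 : ∀ z' x0 w0, 0 ≤ a1 z' x0 w0) (hb1 : ∀ y' z0 x0 v0, 0 ≤ b1 y' z0 x0 v0)
    (ha : ∀ j, 2 ≤ j → j ≤ T → ∀ z' x0 w0 z0 y0, 0 ≤ a j z' x0 w0 z0 y0)
    (hb : ∀ j, 2 ≤ j → j ≤ T → ∀ y' z0 x0 v0 y0, 0 ≤ b j y' z0 x0 v0 y0)
    (τ : Traj U X V W Z Y T) : 0 ≤ jointG1 T q1 qu qx qv qw a1 b1 a b τ := by
  unfold jointG1
  refine mul_nonneg (mul_nonneg (mul_nonneg ?_ ?_) ?_) ?_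
  · split_ifs <;> norm_num
  · exact mul_nonneg (hq1 _) (Finset.prod_nonneg fun j _ => hqu _ _)
  · exact Finset.prod_nonneg fun j _ => mul_nonneg (mul_nonneg (hqx _ _) (hqv _ _)) (hqw _ _)
  · refine mul_nonneg (mul_nonneg (ha1 _ _ _) (hb1 _ _ _ _)) (Finset.prod_nonneg fun j hj => ?_)
    rw [Finset.mem_Icc] at hj
    exact mul_nonneg (ha j hj.1 hj.2 _ _ _ _ _) (hb j hj.1 hj.2 _ _ _ _ _)

end Helpers

/-- Long-term causal effects of recurring interventions do(x_{t:t+k}),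
graph G1: with C = (v_{t:t+k}, w_{t:t+k}, z_{t-1}, S_{t-1}) and assuming
P(x_{t:t+k} = x*_{t:t+k}, c) > 0 whenever P(c) > 0, for every pair of values (y, z):
P(y_{t+k} = y, z_{t+k} = z | do(x_{t:t+k} = x*_{t:t+k}))
  = Σ_c P(y_{t+k} = y, z_{t+k} = z | x_{t:t+k} = x*_{t:t+k}, c) P(c)
  = Σ_c [Σ_{y_{t:t+k-1}, z_{t:t+k-1}} ∏_{j=t}^{t+k} b(y_j) a(z_j)] P(c),
with y_{t+k} = y and z_{t+k} = z held fixed in the inner sum. -/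
theorem statement_2 {U X V W Z Y : Type}
    [Fintype U] [Fintype X] [Fintype V] [Fintype W] [Fintype Z] [Fintype Y]
    [DecidableEq U] [DecidableEq X] [DecidableEq V] [DecidableEq W] [DecidableEq Z]
    [DecidableEq Y]
    [Inhabited U] [Inhabited X] [Inhabited V] [Inhabited W] [Inhabited Z] [Inhabited Y]
    (T t k : ℕ) (ht2 : 2 ≤ t) (htkT : t + k ≤ T) (xstar : ℕ → X)
    (q1 : U → ℝ) (qu : U → U → ℝ) (qx : X → U → ℝ) (qv : V → U → ℝ) (qw : W → U → ℝ)
    (a1 : Z → X → W → ℝ) (b1 : Y → Z → X → V → ℝ)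
    (a : ℕ → Z → X → W → Z → Y → ℝ) (b : ℕ → Y → Z → X → V → Y → ℝ)
    (hq1 : (∀ u', 0 ≤ q1 u') ∧ (∑ u', q1 u') = 1)
    (hqu : ∀ u0, (∀ u', 0 ≤ qu u' u0) ∧ (∑ u', qu u' u0) = 1)
    (hqx : ∀ u0, (∀ x', 0 ≤ qx x' u0) ∧ (∑ x', qx x' u0) = 1)
    (hqv : ∀ u0, (∀ v', 0 ≤ qv v' u0) ∧ (∑ v', qv v' u0) = 1)
    (hqw : ∀ u0, (∀ w', 0 ≤ qw w' u0) ∧ (∑ w', qw w' u0) = 1)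
    (ha1 : ∀ x0 w0, (∀ z', 0 ≤ a1 z' x0 w0) ∧ (∑ z', a1 z' x0 w0) = 1)
    (hb1 : ∀ z0 x0 v0, (∀ y', 0 ≤ b1 y' z0 x0 v0) ∧ (∑ y', b1 y' z0 x0 v0) = 1)
    (ha : ∀ j, 2 ≤ j → j ≤ T → ∀ x0 w0 z0 y0,
      (∀ z', 0 ≤ a j z' x0 w0 z0 y0) ∧ (∑ z', a j z' x0 w0 z0 y0) = 1)
    (hb : ∀ j, 2 ≤ j → j ≤ T → ∀ z0 x0 v0 y0,
      (∀ y', 0 ≤ b j y' z0 x0 v0 y0) ∧ (∑ y', b j y' z0 x0 v0 y0) = 1)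
    (hpos : ∀ (hvk : Fin (k + 1) → V) (hwk : Fin (k + 1) → W) (zt1 : Z)
        (hy : Fin t → Y) (hx : Fin t → X) (hv : Fin t → V) (hw : Fin t → W),
      0 < pr (jointG1 T q1 qu qx qv qw a1 b1 a b)
          (fun τ => (∀ i : Fin (k + 1), τ.v (idx T (t + i.val)) = hvk i) ∧
            (∀ i : Fin (k + 1), τ.w (idx T (t + i.val)) = hwk i) ∧
            τ.z (idx T (t - 1)) = zt1 ∧ histEv T t τ hy hx hv hw) →
      0 < pr (jointG1 T q1 qu qx qv qw a1 b1 a b)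
          (fun τ => (∀ j, t ≤ j → j ≤ t + k → τ.x (idx T j) = xstar j) ∧
            (∀ i : Fin (k + 1), τ.v (idx T (t + i.val)) = hvk i) ∧
            (∀ i : Fin (k + 1), τ.w (idx T (t + i.val)) = hwk i) ∧
            τ.z (idx T (t - 1)) = zt1 ∧ histEv T t τ hy hx hv hw)) :
    ∀ (yv : Y) (zv : Z),
      (pr (doxG1 T (Finset.Icc t (t + k)) xstar q1 qu qx qv qw a1 b1 a b)
          (fun τ => τ.y (idx T (t + k)) = yv ∧ τ.z (idx T (t + k)) = zv) =
        ∑ hvk : Fin (k + 1) → V, ∑ hwk : Fin (k + 1) → W, ∑ zt1 : Z,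
          ∑ hy : Fin t → Y, ∑ hx : Fin t → X, ∑ hv : Fin t → V, ∑ hw : Fin t → W,
          cpr (jointG1 T q1 qu qx qv qw a1 b1 a b)
            (fun τ => τ.y (idx T (t + k)) = yv ∧ τ.z (idx T (t + k)) = zv)
            (fun τ => (∀ j, t ≤ j → j ≤ t + k → τ.x (idx T j) = xstar j) ∧
              (∀ i : Fin (k + 1), τ.v (idx T (t + i.val)) = hvk i) ∧
              (∀ i : Fin (k + 1), τ.w (idx T (t + i.val)) = hwk i) ∧
              τ.z (idx T (t - 1)) = zt1 ∧ histEv T t τ hy hx hv hw) *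
          pr (jointG1 T q1 qu qx qv qw a1 b1 a b)
            (fun τ => (∀ i : Fin (k + 1), τ.v (idx T (t + i.val)) = hvk i) ∧
              (∀ i : Fin (k + 1), τ.w (idx T (t + i.val)) = hwk i) ∧
              τ.z (idx T (t - 1)) = zt1 ∧ histEv T t τ hy hx hv hw)) ∧
      (pr (doxG1 T (Finset.Icc t (t + k)) xstar q1 qu qx qv qw a1 b1 a b)
          (fun τ => τ.y (idx T (t + k)) = yv ∧ τ.z (idx T (t + k)) = zv) =
        ∑ hvk : Fin (k + 1) → V, ∑ hwk : Fin (k + 1) → W, ∑ zt1 : Z,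
          ∑ hy : Fin t → Y, ∑ hx : Fin t → X, ∑ hv : Fin t → V, ∑ hw : Fin t → W,
          (∑ gy : Fin k → Y, ∑ gz : Fin k → Z,
            ∏ i : Fin (k + 1),
              (b (t + i.val) (extWith k gy yv i) (extWith k gz zv i) (xstar (t + i.val))
                  (hvk i) (shiftFirst k (hy ⟨t - 1, by omega⟩) gy i) *
                a (t + i.val) (extWith k gz zv i) (xstar (t + i.val)) (hwk i)
                  (shiftFirst k zt1 gz i) (shiftFirst k (hy ⟨t - 1, by omega⟩) gy i))) *
          pr (jointG1 T q1 qu qx qv qw a1 b1 a b)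
            (fun τ => (∀ i : Fin (k + 1), τ.v (idx T (t + i.val)) = hvk i) ∧
              (∀ i : Fin (k + 1), τ.w (idx T (t + i.val)) = hwk i) ∧
              τ.z (idx T (t - 1)) = zt1 ∧ histEv T t τ hy hx hv hw)) := by
  obtain ⟨n, rfl⟩ := Nat.exists_eq_add_of_le htkT
  intro yv zv
  simp only [cfg_iff, xev_iff] at hpos ⊢
  have hnn := joint_nonneg (t + k + n) q1 qu qx qv qw a1 b1 a b hq1.1 (fun u' u0 => (hqu u0).1 u')
    (fun u' u0 => (hqx u0).1 u') (fun u' u0 => (hqv u0).1 u') (fun u' u0 => (hqw u0).1 u')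
    (fun z' x0 w0 => (ha1 x0 w0).1 z') (fun y' z0 x0 v0 => (hb1 z0 x0 v0).1 y')
    (fun j h1 h2 z' x0 w0 z0 y0 => (ha j h1 h2 x0 w0 z0 y0).1 z')
    (fun j h1 h2 y' z0 x0 v0 y0 => (hb j h1 h2 z0 x0 v0 y0).1 y')
  have key := factI (n := n) (k := k) ht2 xstar q1 qu qx qv qw a1 b1 a b hqx ha hb yv zv
  rw [← sum_pr] at key
  simp only [Fintype.sum_prod_type] at key
  constructor
  · rw [key]
    refine Finset.sum_congr rfl fun hvk _ => Finset.sum_congr rfl fun hwk _ =>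
      Finset.sum_congr rfl fun zt1 _ => Finset.sum_congr rfl fun hy _ =>
      Finset.sum_congr rfl fun hx _ => Finset.sum_congr rfl fun hv _ =>
      Finset.sum_congr rfl fun hw _ => ?_
    have hP : 0 ≤ pr (jointG1 (t + k + n) q1 qu qx qv qw a1 b1 a b)
        (fun τ => cfg (t + k + n) t k τ = (hvk, hwk, zt1, hy, hx, hv, hw)) := by
      unfold pr
      refine Finset.sum_nonneg fun τ _ => ?_
      split_ifs
      · exact hnn τ
      · exact le_refl _
    rcases hP.eq_or_lt with h0 | h0
    · rw [← h0, mul_zero, mul_zero]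
    · have h1 := hpos hvk hwk zt1 hy hx hv hw h0
      rw [cpr, factII ht2 xstar q1 qu qx qv qw a1 b1 a b hqx ha hb yv zv,
        mul_div_cancel_right₀ _ h1.ne']
  · rw [key]
    refine Finset.sum_congr rfl fun hvk _ => Finset.sum_congr rfl fun hwk _ =>
      Finset.sum_congr rfl fun zt1 _ => Finset.sum_congr rfl fun hy _ =>
      Finset.sum_congr rfl fun hx _ => Finset.sum_congr rfl fun hv _ =>
      Finset.sum_congr rfl fun hw _ => ?_
    congr 1
    rw [Ktot, innerK_ind]
    have : pastVal hy (t - 1) = hy ⟨t - 1, by omega⟩ := dif_pos (by omega)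
    simp only [this]
end
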